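/- arXiv:1612.08257 — 2 statements merged into one kernel-verified Lean document; each statement's English description precedes it below -/
import Mathlib

section
/- Let k be a field and A and B be k-algebras such that A ⊗_k B is noetherian. If A and B are almost Cohen-Macaulay rings and moreover one of them is Cohen-Macaulay, then A ⊗_k B is an almost Cohen-Macaulay ring. -/
noncomputable section

open TensorProduct

universe u v w





/-- The depth of the ideal `I` on the module `M`: the supremum of lengths of
`M`-regular sequences with entries in `I`. -/
noncomputable def idealDepth (A : Type u) [CommRing A] (I : Ideal A)
    (M : Type v) [AddCommGroup M] [Module A M] : ℕ∞ :=
  sSup {n : ℕ∞ | ∃ rs : List A, (rs.length : ℕ∞) = n ∧ (∀ r ∈ rs, r ∈ I) ∧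
    RingTheory.Sequence.IsRegular M rs}

/-- The depth of a module over a local ring. -/
noncomputable def localDepth (A : Type u) [CommRing A] [IsLocalRing A]
    (M : Type v) [AddCommGroup M] [Module A M] : ℕ∞ :=
  idealDepth A (IsLocalRing.maximalIdeal A) M

/-- The (Krull) dimension of a module, i.e. the Krull dimension of its support. -/
noncomputable def supportDim (A : Type u) [CommRing A]
    (M : Type v) [AddCommGroup M] [Module A M] : WithBot ℕ∞ :=
  Order.krullDim (Module.support A M)

/-- `depth (M_P)` : the depth of the localization of `M` at a prime `P`,
over the local ring `A_P`. -/
noncomputable def depthAt (A : Type u) [CommRing A]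
    (M : Type v) [AddCommGroup M] [Module A M] (P : PrimeSpectrum A) : ℕ∞ :=
  localDepth (Localization.AtPrime P.asIdeal) (LocalizedModule P.asIdeal.primeCompl M)

/-- `ht_M(P) = dim (M_P)` : the height of a prime `P` in the support of `M`,
i.e. the dimension of the localized module `M_P` over `A_P`. -/
noncomputable def heightAt (A : Type u) [CommRing A]
    (M : Type v) [AddCommGroup M] [Module A M] (P : PrimeSpectrum A) : WithBot ℕ∞ :=
  supportDim (Localization.AtPrime P.asIdeal) (LocalizedModule P.asIdeal.primeCompl M)

/-- Serre's condition `(S_n)` for a module: for every `P` in the support,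
`depth (M_P) ≥ min (n, ht_M(P))`. -/
def SerreCondS (A : Type u) [CommRing A] (n : ℕ)
    (M : Type v) [AddCommGroup M] [Module A M] : Prop :=
  ∀ P ∈ Module.support A M,
    min (n : WithBot ℕ∞) (heightAt A M P) ≤ (depthAt A M P : WithBot ℕ∞)

/-- The condition `(C_n)` for a module: for every `P` in the support,
`depth (M_P) ≥ min (n, ht_M(P)) - 1`, equivalently
`min (n, ht_M(P)) ≤ depth (M_P) + 1`. -/
def CondC (A : Type u) [CommRing A] (n : ℕ)
    (M : Type v) [AddCommGroup M] [Module A M] : Prop :=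
  ∀ P ∈ Module.support A M,
    min (n : WithBot ℕ∞) (heightAt A M P) ≤ (depthAt A M P : WithBot ℕ∞) + 1

/-- A module `M` is almost Cohen-Macaulay if `depth(P, M) = depth (M_P)` for every
`P` in the support of `M` (Kang's definition). -/
def IsAlmostCMModule (A : Type u) [CommRing A]
    (M : Type v) [AddCommGroup M] [Module A M] : Prop :=
  ∀ P ∈ Module.support A M, idealDepth A P.asIdeal M = depthAt A M P

/-- A module `M` is Cohen-Macaulay if `depth (M_P) = dim (M_P)` for every `P` in its
support. -/
def IsCMModule (A : Type u) [CommRing A]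
    (M : Type v) [AddCommGroup M] [Module A M] : Prop :=
  ∀ P ∈ Module.support A M, (depthAt A M P : WithBot ℕ∞) = heightAt A M P

/-- A ring is almost Cohen-Macaulay if it is an almost Cohen-Macaulay module over
itself. -/
abbrev IsAlmostCMRing (A : Type u) [CommRing A] : Prop := IsAlmostCMModule A A

/-- A ring is Cohen-Macaulay if it is a Cohen-Macaulay module over itself, i.e. all its
localizations at primes have depth equal to dimension. -/
abbrev IsCMRing (A : Type u) [CommRing A] : Prop := IsCMModule A A

/-- A ring satisfies `(C_n)` if it does so as a module over itself. -/
abbrev RingCondC (A : Type u) [CommRing A] (n : ℕ) : Prop := CondC A n A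

/-- A ring satisfies `(S_n)` if it does so as a module over itself. -/
abbrev RingSerreCondS (A : Type u) [CommRing A] (n : ℕ) : Prop := SerreCondS A n A

section

open TensorProduct IsLocalRing

theorem LinearMap.rTensor_injective_of_isFiniteLength {R N M : Type*} [CommRing R] [IsLocalRing R]
    [AddCommGroup N] [Module R N] [Module.Flat R N] (φ : N →ₗ[R] N)
    (h : Function.Injective (φ.rTensor (R ⧸ maximalIdeal R)))
    [AddCommGroup M] [Module R M] (hM : IsFiniteLength R M) :
    Function.Injective (φ.rTensor M) := by
  induction hM with
  | of_subsingleton => exact Function.injective_of_subsingleton _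
  | @of_simple_quotient M _ _ P hsimple _ ih =>
    rw [injective_iff_map_eq_zero]
    intro z hz
    obtain ⟨m, hm, ⟨e⟩⟩ := isSimpleModule_iff_quot_maximal.mp hsimple
    obtain rfl := eq_maximalIdeal hm
    have hq : Function.Injective (φ.rTensor (M ⧸ P)) := by
      have : φ.rTensor (M ⧸ P) = (e.symm.toLinearMap.lTensor N ∘ₗ
          φ.rTensor (R ⧸ maximalIdeal R)) ∘ₗ e.toLinearMap.lTensor N := by
        ext; simp
      rw [this]
      exact ((e.symm.lTensor N).injective.comp h).comp (e.lTensor N).injective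
    have h0 : P.mkQ.lTensor N z = 0 := by
      apply hq
      rw [map_zero, ← LinearMap.comp_apply, LinearMap.rTensor_comp_lTensor,
        ← LinearMap.lTensor_comp_rTensor, LinearMap.comp_apply, hz, map_zero]
    obtain ⟨w, rfl⟩ := (lTensor_exact N (LinearMap.exact_subtype_mkQ P)
      P.mkQ_surjective z).mp h0
    have hw : φ.rTensor P w = 0 := by
      apply Module.Flat.lTensor_preserves_injective_linearMap (M := N) P.subtype P.subtype_injective
      rw [map_zero, ← LinearMap.comp_apply, LinearMap.lTensor_comp_rTensor,
        ← LinearMap.rTensor_comp_lTensor, LinearMap.comp_apply, hz]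
    rw [ih (hw.trans (map_zero _).symm), map_zero]

theorem LinearMap.rTensor_quotient_injective_iff {R N : Type*} [CommRing R]
    [AddCommGroup N] [Module R N] (φ : N →ₗ[R] N) (J : Ideal R) :
    Function.Injective (φ.rTensor (R ⧸ J)) ↔
      ∀ n, φ n ∈ J • (⊤ : Submodule R N) → n ∈ J • (⊤ : Submodule R N) := by
  have key (n : N) : φ.rTensor (R ⧸ J) ((tensorQuotEquivQuotSMul N J).symm
      (Submodule.Quotient.mk n)) = (tensorQuotEquivQuotSMul N J).symm
      (Submodule.Quotient.mk (φ n)) := by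
    rw [tensorQuotEquivQuotSMul_symm_mk, tensorQuotEquivQuotSMul_symm_mk, LinearMap.rTensor_tmul]
  rw [injective_iff_map_eq_zero]
  constructor
  · intro h n hn
    have := h _ ((key n).trans (by rw [(Submodule.Quotient.mk_eq_zero _).mpr hn, map_zero]))
    rwa [LinearEquiv.map_eq_zero_iff, Submodule.Quotient.mk_eq_zero] at this
  · intro h z hz
    obtain ⟨z, rfl⟩ := (tensorQuotEquivQuotSMul N J).symm.surjective z
    obtain ⟨n, rfl⟩ := Submodule.Quotient.mk_surjective _ z
    rw [key, LinearEquiv.map_eq_zero_iff, Submodule.Quotient.mk_eq_zero] at hz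
    rw [LinearEquiv.map_eq_zero_iff, Submodule.Quotient.mk_eq_zero]
    exact h n hz

end

section

open TensorProduct IsLocalRing RingTheory.Sequence Pointwise

theorem IsLocalRing.isFiniteLength_quotient_of_pow_le {R : Type*} [CommRing R] [IsLocalRing R]
    [IsNoetherianRing R] {J : Ideal R} {n : ℕ} (h : maximalIdeal R ^ n ≤ J) :
    IsFiniteLength R (R ⧸ J) := by
  by_cases hJ : J = ⊤
  · subst hJ
    have : Subsingleton (R ⧸ (⊤ : Ideal R)) := Ideal.Quotient.subsingleton_iff.mpr rfl
    exact .of_subsingleton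
  have : IsArtinianRing (R ⧸ J) := by
    apply quotient_artinian_of_mem_minimalPrimes_of_isLocalRing
    refine ⟨⟨inferInstance, le_maximalIdeal hJ⟩, fun q hq _ ↦ ?_⟩
    have := hq.1
    exact Ideal.IsPrime.le_of_pow_le (h.trans hq.2)
  rw [isFiniteLength_iff_isNoetherian_isArtinian]
  exact ⟨inferInstance, isArtinian_of_surjective_algebraMap (S := R) (R := R ⧸ J)
    Ideal.Quotient.mk_surjective⟩

theorem Ideal.mem_smul_top_iff_mem_map_smul_top {R : Type*} (S : Type*) {N : Type*} [CommRing R]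
    [CommRing S] [Algebra R S] [AddCommGroup N] [Module R N] [Module S N] [IsScalarTower R S N]
    (J : Ideal R) (x : N) :
    x ∈ J • (⊤ : Submodule R N) ↔ x ∈ J.map (algebraMap R S) • (⊤ : Submodule S N) := by
  rw [← Submodule.restrictScalars_mem R (J.map (algebraMap R S) • (⊤ : Submodule S N)),
    Ideal.smul_restrictScalars]
  rfl

section LocalFlat

variable {R S N : Type*} [CommRing R] [CommRing S] [Algebra R S]
  [IsLocalRing R] [IsLocalRing S] [IsNoetherianRing R] [IsNoetherianRing S]
  [IsLocalHom (algebraMap R S)] [AddCommGroup N] [Module R N] [Module S N] [IsScalarTower R S N]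
  [Module.Finite S N] [Module.Flat R N]

theorem mem_ideal_smul_top_of_smul_mem_of_flat {y : S}
    (hy : ∀ n : N, y • n ∈ maximalIdeal R • (⊤ : Submodule R N) →
      n ∈ maximalIdeal R • (⊤ : Submodule R N)) (I : Ideal R) {n : N}
    (hn : y • n ∈ I • (⊤ : Submodule R N)) : n ∈ I • (⊤ : Submodule R N) := by
  let φ : N →ₗ[R] N := Module.toModuleEnd R N y
  have hφ : ∀ n, φ n = y • n := fun _ ↦ rfl
  have hfin (k : ℕ) : n ∈ (I ⊔ maximalIdeal R ^ k) • (⊤ : Submodule R N) := by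
    have := (LinearMap.rTensor_quotient_injective_iff φ _).mp
      (LinearMap.rTensor_injective_of_isFiniteLength φ
        ((LinearMap.rTensor_quotient_injective_iff φ _).mpr hy)
        (isFiniteLength_quotient_of_pow_le (le_sup_right (a := I) (b := maximalIdeal R ^ k))))
    exact this n (Submodule.smul_mono_left le_sup_left hn)
  let m' := (maximalIdeal R).map (algebraMap R S)
  let NI : Submodule S N := I.map (algebraMap R S) • ⊤
  have hr (J : Ideal R) (x : N) := J.mem_smul_top_iff_mem_map_smul_top S x
  have hm' : m' ≠ ⊤ := fun h ↦ (maximalIdeal.isMaximal S).ne_top <| top_le_iff.mp <|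
    h ▸ ((local_hom_TFAE (algebraMap R S)).out 0 2).mp ‹_›
  have hK := Ideal.iInf_pow_smul_eq_bot_of_isLocalRing (M := N ⧸ NI) m' hm'
  rw [hr, ← Submodule.Quotient.mk_eq_zero, ← Submodule.mem_bot S, ← hK, Submodule.mem_iInf]
  intro k
  have := (hr _ _).mp (hfin k)
  rw [Ideal.map_sup, Submodule.sup_smul, Ideal.map_pow] at this
  obtain ⟨a, ha, b, hb, hab⟩ := Submodule.mem_sup.mp this
  have hna : (Submodule.Quotient.mk n : N ⧸ NI) = NI.mkQ b := by
    rw [← hab, Submodule.Quotient.mk_add, (Submodule.Quotient.mk_eq_zero _).mpr ha, zero_add]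
    rfl
  change (Submodule.Quotient.mk n : N ⧸ NI) ∈ _
  rw [hna]
  have := Submodule.mem_map_of_mem (f := NI.mkQ) hb
  rw [Submodule.map_smul''] at this
  exact Submodule.smul_mono le_rfl le_top this

theorem Module.Flat.of_exact_of_forall_ideal {R N Q : Type*} [CommRing R]
    [AddCommGroup N] [Module R N] [AddCommGroup Q] [Module R Q]
    [Module.Flat R N] {φ : N →ₗ[R] N} {π : N →ₗ[R] Q} (hφπ : Function.Exact φ π)
    (hπ : Function.Surjective π)
    (hφ : ∀ (I : Ideal R) (n : N), φ n ∈ I • (⊤ : Submodule R N) →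
      n ∈ I • (⊤ : Submodule R N)) : Module.Flat R Q := by
  rw [Module.Flat.iff_lTensor_injective']
  intro I
  rw [injective_iff_map_eq_zero]
  intro z hz
  obtain ⟨w, rfl⟩ := LinearMap.rTensor_surjective I hπ z
  rw [← LinearMap.comp_apply, LinearMap.lTensor_comp_rTensor, ← LinearMap.rTensor_comp_lTensor,
    LinearMap.comp_apply] at hz
  obtain ⟨u, hu⟩ := (TensorProduct.rid R N).symm.surjective (I.subtype.lTensor N w)
  have hu' : π u = 0 := by
    rw [← hu, TensorProduct.rid_symm_apply, LinearMap.rTensor_tmul] at hz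
    simpa using congrArg (TensorProduct.rid R Q) hz
  obtain ⟨n, hn⟩ := (hφπ u).mp hu'
  have huI : u ∈ I • (⊤ : Submodule R N) := by
    rw [← LinearEquiv.eq_symm_apply, LinearEquiv.symm_symm] at hu
    rw [hu]
    clear hu hz
    induction w with
    | zero => simp
    | add a b ha hb => rw [map_add, map_add]; exact add_mem ha hb
    | tmul a b =>
      rw [LinearMap.lTensor_tmul, TensorProduct.rid_tmul]
      exact Submodule.smul_mem_smul b.2 trivial
  have hnI := hφ I n (hn ▸ huI)
  have hlift : ∀ x ∈ I • (⊤ : Submodule R N), ∃ v : N ⊗[R] I, I.subtype.lTensor N v = x ⊗ₜ 1 := by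
    intro x hx
    refine Submodule.smul_induction_on hx (fun r hr n _ ↦ ⟨n ⊗ₜ ⟨r, hr⟩, ?_⟩) ?_
    · rw [LinearMap.lTensor_tmul, TensorProduct.smul_tmul, Submodule.subtype_apply, smul_eq_mul,
        mul_one]
    · rintro a b ⟨a', ha⟩ ⟨b', hb⟩
      exact ⟨a' + b', by rw [map_add, ha, hb, TensorProduct.add_tmul]⟩
  obtain ⟨v, hv⟩ := hlift n hnI
  have hwv : w = φ.rTensor I v := by
    apply Module.Flat.lTensor_preserves_injective_linearMap (M := N) I.subtype I.subtype_injective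
    rw [← LinearMap.comp_apply, LinearMap.lTensor_comp_rTensor, ← LinearMap.rTensor_comp_lTensor,
      LinearMap.comp_apply, hv, ← hu, TensorProduct.rid_symm_apply, LinearMap.rTensor_tmul, hn]
  rw [hwv, ← LinearMap.comp_apply, ← LinearMap.rTensor_comp, hφπ.linearMap_comp_eq_zero,
    LinearMap.rTensor_zero, LinearMap.zero_apply]

theorem Module.Flat.quotSMulTop_of_forall_ideal {R S N : Type*} [CommRing R] [CommRing S]
    [Algebra R S] [AddCommGroup N] [Module R N] [Module S N] [IsScalarTower R S N]
    [Module.Flat R N] {y : S}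
    (hy : ∀ (I : Ideal R) (n : N), y • n ∈ I • (⊤ : Submodule R N) →
      n ∈ I • (⊤ : Submodule R N)) : Module.Flat R (QuotSMulTop y N) := by
  let π : N →ₗ[R] QuotSMulTop y N := (Submodule.mkQ (y • (⊤ : Submodule S N))).restrictScalars R
  have hπ : Function.Surjective π := fun q ↦ Submodule.Quotient.mk_surjective _ q
  refine Module.Flat.of_exact_of_forall_ideal (φ := Module.toModuleEnd R N y) (fun n ↦ ?_) hπ hy
  refine (Submodule.Quotient.mk_eq_zero (y • (⊤ : Submodule S N))).trans ⟨?_, ?_⟩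
  · rintro ⟨x, -, rfl⟩
    exact ⟨x, rfl⟩
  · rintro ⟨x, rfl⟩
    exact Submodule.smul_mem_pointwise_smul x y ⊤ trivial

variable (N) in
theorem isWeaklyRegular_append_map_of_flat {xs : List R} (hxs : IsWeaklyRegular R xs)
    {ys : List S} (hys : IsWeaklyRegular (N ⊗[S] (S ⧸ (maximalIdeal R).map (algebraMap R S))) ys) :
    IsWeaklyRegular N (ys ++ xs.map (algebraMap R S)) := by
  induction ys generalizing N with
  | nil =>
    rw [List.nil_append, isWeaklyRegular_map_algebraMap_iff,
      ← (TensorProduct.rid R N).isWeaklyRegular_congr]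
    exact hxs.isWeaklyRegular_lTensor
  | cons y ys ih =>
    rw [isWeaklyRegular_cons_iff] at hys
    have hy (I : Ideal R) (n : N) : y • n ∈ I • (⊤ : Submodule R N) →
        n ∈ I • (⊤ : Submodule R N) := by
      refine mem_ideal_smul_top_of_smul_mem_of_flat (fun n ↦ ?_) I
      have := (LinearMap.rTensor_quotient_injective_iff (y • LinearMap.id : N →ₗ[S] N)
        ((maximalIdeal R).map (algebraMap R S))).mp (by
          rw [LinearMap.rTensor_smul, LinearMap.rTensor_id]
          exact hys.1) n
      rw [Ideal.mem_smul_top_iff_mem_map_smul_top S (maximalIdeal R),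
        Ideal.mem_smul_top_iff_mem_map_smul_top S (maximalIdeal R)]
      exact this
    have := Module.Flat.quotSMulTop_of_forall_ideal hy
    rw [List.cons_append, isWeaklyRegular_cons_iff]
    refine ⟨?_, ih (N := QuotSMulTop y N) ?_⟩
    · rw [isSMulRegular_iff_right_eq_zero_of_smul]
      intro n hn
      simpa using hy ⊥ n (by simp [hn])
    · rw [(QuotSMulTop.quotSMulTopTensorEquivQuotSMulTop y _ N).isWeaklyRegular_congr]
      exact hys.2

end LocalFlat

end

section

open TensorProduct IsLocalRing RingTheory.Sequence

/-- The Krull dimension of `R` exceeds the length of some regular sequence by at most `d`. -/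
def HasDefectLE (R : Type*) [CommRing R] (d : ℕ) : Prop :=
  ∃ rs : List R, IsRegular R rs ∧ ringKrullDim R ≤ (rs.length + d : ℕ)

/-- Every localization of `R` at a prime has Cohen-Macaulay defect at most `d`. -/
def CMDefectLE (R : Type*) [CommRing R] (d : ℕ) : Prop :=
  ∀ (P : Ideal R) [P.IsPrime], HasDefectLE (Localization.AtPrime P) d

theorem RingTheory.Sequence.IsRegular.mem_maximalIdeal {R : Type*} [CommRing R] [IsLocalRing R]
    {rs : List R} (h : IsRegular R rs) {r : R} (hr : r ∈ rs) : r ∈ maximalIdeal R := by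
  rw [IsLocalRing.mem_maximalIdeal, mem_nonunits_iff]
  intro hu
  apply h.top_ne_smul
  have : Ideal.ofList rs = ⊤ := Ideal.eq_top_of_isUnit_mem _ (Ideal.subset_span hr) hu
  rw [this, Submodule.top_smul]

theorem HasDefectLE.of_ringEquiv {R S : Type*} [CommRing R] [CommRing S] (e : R ≃+* S) {d : ℕ}
    (h : HasDefectLE R d) : HasDefectLE S d := by
  obtain ⟨rs, h, hd⟩ := h
  refine ⟨rs.map e, ?_, ?_⟩
  · refine (AddEquiv.isRegular_congr (e := e.toAddEquiv) ?_).mp h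
    rw [List.forall₂_map_right_iff, List.forall₂_same]
    intro r _ x
    simp
  · rwa [List.length_map, ← ringKrullDim_eq_of_ringEquiv e]

theorem ringKrullDim_le_add_of_isLocalHom (R S : Type*) [CommRing R] [CommRing S] [Algebra R S]
    [IsLocalRing R] [IsLocalRing S] [IsNoetherianRing R] [IsNoetherianRing S]
    [IsLocalHom (algebraMap R S)] :
    ringKrullDim S ≤ ringKrullDim R + ringKrullDim (S ⧸ (maximalIdeal R).map (algebraMap R S)) := by
  have hle := ((local_hom_TFAE (algebraMap R S)).out 0 2).mp ‹_›
  have : (maximalIdeal S).LiesOver (maximalIdeal R) :=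
    ⟨(maximalIdeal_comap (algebraMap R S)).symm⟩
  have : Nontrivial (S ⧸ (maximalIdeal R).map (algebraMap R S)) :=
    Ideal.Quotient.nontrivial_iff.mpr fun h ↦
      (maximalIdeal.isMaximal S).ne_top (top_le_iff.mp (h ▸ hle))
  have hprime : ((maximalIdeal S).map
      (Ideal.Quotient.mk ((maximalIdeal R).map (algebraMap R S)))).IsPrime :=
    Ideal.map_isPrime_of_surjective Ideal.Quotient.mk_surjective (by rwa [Ideal.mk_ker])
  rw [← maximalIdeal_height_eq_ringKrullDim, ← maximalIdeal_height_eq_ringKrullDim]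
  have h1 := Ideal.height_le_height_add_of_liesOver (maximalIdeal R) (maximalIdeal S)
  have h2 := Ideal.height_le_ringKrullDim_of_ne_top hprime.ne_top
  calc ((maximalIdeal S).height : WithBot ℕ∞) ≤ ((maximalIdeal R).height +
        ((maximalIdeal S).map (Ideal.Quotient.mk ((maximalIdeal R).map (algebraMap R S)))).height :
          ℕ∞) := by
        exact_mod_cast h1
    _ ≤ _ := by
        push_cast
        gcongr

theorem HasDefectLE.of_flat_of_isLocalHom {R S : Type*} [CommRing R] [CommRing S] [Algebra R S]
    [IsLocalRing R] [IsLocalRing S] [IsNoetherianRing R] [IsNoetherianRing S]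
    [IsLocalHom (algebraMap R S)] [Module.Flat R S] {a b : ℕ} (hR : HasDefectLE R a)
    (hS : HasDefectLE (S ⧸ (maximalIdeal R).map (algebraMap R S)) b) : HasDefectLE S (a + b) := by
  obtain ⟨xs, hxs, hxd⟩ := hR
  obtain ⟨ys, hys, hyd⟩ := hS
  have : Nontrivial (S ⧸ (maximalIdeal R).map (algebraMap R S)) := hys.nontrivial
  obtain ⟨ys, rfl⟩ := List.map_surjective_iff.mpr
    (Ideal.Quotient.mk_surjective (I := (maximalIdeal R).map (algebraMap R S))) ys
  have : IsLocalRing (S ⧸ (maximalIdeal R).map (algebraMap R S)) :=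
    .of_surjective' _ Ideal.Quotient.mk_surjective
  have hw : IsWeaklyRegular S (ys ++ xs.map (algebraMap R S)) := by
    refine isWeaklyRegular_append_map_of_flat S hxs.toIsWeaklyRegular ?_
    rw [(TensorProduct.lid S _).isWeaklyRegular_congr, ← isWeaklyRegular_map_algebraMap_iff
      (S ⧸ (maximalIdeal R).map (algebraMap R S))]
    exact hys.toIsWeaklyRegular
  refine ⟨ys ++ xs.map (algebraMap R S),
    (isRegular_iff_isWeaklyRegular_of_subset_maximalIdeal fun r hr ↦ ?_).mpr hw, ?_⟩
  · rcases List.mem_append.mp hr with hr | hr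
    · have := hys.mem_maximalIdeal (List.mem_map_of_mem hr)
      rw [IsLocalRing.mem_maximalIdeal, mem_nonunits_iff] at this ⊢
      exact fun h ↦ this (h.map _)
    · obtain ⟨x, hx, rfl⟩ := List.mem_map.mp hr
      exact map_nonunit (algebraMap R S) _ (hxs.mem_maximalIdeal hx)
  · refine (ringKrullDim_le_add_of_isLocalHom R S).trans ((add_le_add hxd hyd).trans ?_)
    simp only [List.length_append, List.length_map]
    norm_cast
    omega

end

section

open TensorProduct IsLocalRing RingTheory.Sequence

theorem CMDefectLE.of_ringEquiv {R S : Type*} [CommRing R] [CommRing S] (e : R ≃+* S) {d : ℕ}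
    (h : CMDefectLE R d) : CMDefectLE S d := fun P _ ↦
  (h (P.comap e)).of_ringEquiv (Localization.localRingEquiv (P.comap e) P e rfl)

theorem CMDefectLE.of_flat {R S : Type*} [CommRing R] [CommRing S] [Algebra R S]
    [IsNoetherianRing R] [IsNoetherianRing S] [Module.Flat R S] {a b : ℕ} (hR : CMDefectLE R a)
    (hS : ∀ (p : Ideal R) [p.IsPrime], CMDefectLE (p.Fiber S) b) : CMDefectLE S (a + b) := by
  intro P _
  obtain ⟨p, _, hp⟩ : ∃ p : Ideal R, ∃ _ : p.IsPrime, P.LiesOver p :=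
    ⟨P.under R, inferInstance, ⟨rfl⟩⟩
  obtain ⟨q, _, hq⟩ : ∃ (q : Ideal (p.Fiber S)) (_ : q.IsPrime),
      P = q.comap Algebra.TensorProduct.includeRight :=
    ⟨(PrimeSpectrum.primesOverOrderIsoFiber R S p ⟨P, ‹_›, hp⟩).asIdeal, inferInstance, by
      rw [← PrimeSpectrum.coe_primesOverOrderIsoFiber_symm_apply, OrderIso.symm_apply_apply]⟩
  subst hq
  let _ := Localization.AtPrime.algebraOfLiesOver p (q.comap Algebra.TensorProduct.includeRight)
  have : IsLocalHom (algebraMap (Localization.AtPrime p)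
      (Localization.AtPrime (q.comap Algebra.TensorProduct.includeRight))) :=
    Localization.isLocalHom_localRingHom ..
  refine HasDefectLE.of_flat_of_isLocalHom (hR p) ?_
  refine (hS p q).of_ringEquiv ?_
  refine (Ideal.Fiber.localizationAlgEquivQuotient p q).toRingEquiv.trans
    (Ideal.quotEquivOfEq ?_)
  rw [← Localization.AtPrime.map_eq_maximalIdeal, Ideal.map_map, ← IsScalarTower.algebraMap_eq]

/-- The fibre of `R ⊗[k] K` over a prime of `R` is a base change of `K` to the residue field. -/
noncomputable def Ideal.Fiber.tensorProductEquiv (k : Type*) {R : Type*} (K : Type*) [Field k]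
    [CommRing R] [CommRing K] [Algebra k R] [Algebra k K] (p : Ideal R) [p.IsPrime] :
    p.Fiber (R ⊗[k] K) ≃+* p.ResidueField ⊗[k] K :=
  (Algebra.TensorProduct.cancelBaseChange k R R p.ResidueField K).toRingEquiv

theorem CMDefectLE.tensorProduct_of_residueField {k R K : Type*} [Field k] [CommRing R] [CommRing K]
    [Algebra k R] [Algebra k K] [IsNoetherianRing R] [IsNoetherianRing (R ⊗[k] K)] {a b : ℕ}
    (hR : CMDefectLE R a)
    (hK : ∀ (p : Ideal R) [p.IsPrime], CMDefectLE (p.ResidueField ⊗[k] K) b) :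
    CMDefectLE (R ⊗[k] K) (a + b) :=
  hR.of_flat fun p _ ↦ (hK p).of_ringEquiv (Ideal.Fiber.tensorProductEquiv k K p).symm

theorem isNoetherianRing_residueField_tensorProduct {k R K : Type*} [Field k] [CommRing R]
    [CommRing K] [Algebra k R] [Algebra k K] [IsNoetherianRing (R ⊗[k] K)] (p : Ideal R)
    [p.IsPrime] : IsNoetherianRing (p.ResidueField ⊗[k] K) := by
  have : IsNoetherianRing ((R ⊗[k] K) ⊗[R] p.ResidueField) :=
    Algebra.EssFiniteType.isNoetherianRing (R ⊗[k] K) _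
  exact isNoetherianRing_of_ringEquiv _ ((Algebra.TensorProduct.comm R _ _).toRingEquiv.trans
    (Ideal.Fiber.tensorProductEquiv k K p))

end

section

open TensorProduct IsLocalRing RingTheory.Sequence

theorem CMDefectLE.of_isLocalization {R S : Type*} [CommRing R] [CommRing S] [Algebra R S]
    (M : Submonoid R) [IsLocalization M S] {d : ℕ} (h : CMDefectLE R d) : CMDefectLE S d := by
  intro P _
  have := IsLocalization.isLocalization_isLocalization_atPrime_isLocalization M
    (Localization.AtPrime P) P
  exact (h (P.comap (algebraMap R S))).of_ringEquiv
    (IsLocalization.algEquiv (P.comap (algebraMap R S)).primeCompl _ _).toRingEquiv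

theorem CMDefectLE.of_ringKrullDim_le_zero {R : Type*} [CommRing R] (h : ringKrullDim R ≤ 0) :
    CMDefectLE R 0 := by
  intro P _
  refine ⟨[], .nil _ _, ?_⟩
  rw [IsLocalization.AtPrime.ringKrullDim_eq_height P]
  simpa using (Ideal.height_le_ringKrullDim_of_ne_top ‹P.IsPrime›.ne_top).trans h

theorem CMDefectLE.of_isDomain_of_ringKrullDim_le_one {R : Type*} [CommRing R] [IsDomain R]
    (h : ringKrullDim R ≤ 1) : CMDefectLE R 0 := by
  intro P _
  have hP := (Ideal.height_le_ringKrullDim_of_ne_top ‹P.IsPrime›.ne_top).trans h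
  by_cases hbot : P = ⊥
  · subst hbot
    refine ⟨[], .nil _ _, ?_⟩
    rw [IsLocalization.AtPrime.ringKrullDim_eq_height (⊥ : Ideal R)]
    simp
  obtain ⟨x, hx, hx0⟩ := Submodule.exists_mem_ne_zero_of_ne_bot hbot
  have : IsDomain (Localization.AtPrime P) := IsLocalization.isDomain_localization
    P.primeCompl_le_nonZeroDivisors
  refine ⟨[algebraMap R _ x], (isRegular_iff_isWeaklyRegular_of_subset_maximalIdeal ?_).mpr ?_, ?_⟩
  · simpa using (IsLocalization.AtPrime.to_map_mem_maximal_iff _ P x).mpr hx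
  · rw [isWeaklyRegular_singleton_iff]
    refine IsSMulRegular.of_ne_zero ?_
    exact (map_ne_zero_iff _ (IsLocalization.injective _ P.primeCompl_le_nonZeroDivisors)).mpr hx0
  · rw [IsLocalization.AtPrime.ringKrullDim_eq_height P]
    simpa using hP

theorem CMDefectLE.tensorProduct_of_isLocalization {k A B L : Type*} [CommRing k] [CommRing A]
    [CommRing B] [CommRing L] [Algebra k A] [Algebra k B] [Algebra k L] [Algebra A B]
    [IsScalarTower k A B] (M : Submonoid A) [IsLocalization M B] {d : ℕ}
    (h : CMDefectLE (A ⊗[k] L) d) : CMDefectLE (B ⊗[k] L) d := by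
  let f : A ⊗[k] L →ₐ[A] B ⊗[k] L := Algebra.TensorProduct.map (Algebra.ofId _ _) (AlgHom.id k L)
  let _ := f.toRingHom.toAlgebra
  have : IsScalarTower A (A ⊗[k] L) (B ⊗[k] L) := .of_algebraMap_eq' f.comp_algebraMap.symm
  have := IsLocalization.tensorProduct_tensorProduct k L M B (by
    ext l
    change f (1 ⊗ₜ l) = _
    simp [f])
  exact .of_isLocalization (Algebra.algebraMapSubmonoid (A ⊗[k] L) M) h

open IntermediateField IntermediateField.algebraAdjoinAdjoin Polynomial in
theorem CMDefectLE.tensorProduct_adjoin_simple {E K : Type*} (L : Type*) [Field E] [Field K]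
    [Field L] [Algebra E K] [Algebra E L] (x : K) : CMDefectLE (L ⊗[E] E⟮x⟯) 0 := by
  by_cases hx : IsIntegral E x
  · have := adjoin.finiteDimensional hx
    have : IsArtinianRing (L ⊗[E] E⟮x⟯) := isArtinian_of_tower L inferInstance
    exact .of_ringKrullDim_le_zero (Ring.krullDimLE_iff.mp inferInstance)
  have hx : Transcendental E x := fun h ↦ hx h.isIntegral
  have hpoly : CMDefectLE (Algebra.adjoin E {x} ⊗[E] L) 0 := by
    refine CMDefectLE.of_ringEquiv ?_ (.of_isDomain_of_ringKrullDim_le_one (R := L[X])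
      (Ring.krullDimLE_iff.mp inferInstance))
    exact ((polyEquivTensor' E L).toRingEquiv.trans
      (Algebra.TensorProduct.comm E _ _).toRingEquiv).trans
      (Algebra.TensorProduct.congr (algEquivOfTranscendental E x hx) AlgEquiv.refl).toRingEquiv
  exact (hpoly.tensorProduct_of_isLocalization (B := E⟮x⟯)
    (nonZeroDivisors (Algebra.adjoin E {x}))).of_ringEquiv
      (Algebra.TensorProduct.comm E _ _).toRingEquiv

end

section

open TensorProduct IsLocalRing RingTheory.Sequence

theorem isNoetherianRing_tensorProduct_of_essFiniteType (k E L : Type*) [CommRing k] [CommRing E]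
    [CommRing L] [Algebra k E] [Algebra k L] [IsNoetherianRing L] [Algebra.EssFiniteType k E] :
    IsNoetherianRing (E ⊗[k] L) :=
  have : IsNoetherianRing (L ⊗[k] E) := Algebra.EssFiniteType.isNoetherianRing L _
  isNoetherianRing_of_ringEquiv _ (Algebra.TensorProduct.comm k L E).toRingEquiv

/-- Base change of `E ⊗[k] L` along `E → E'`. -/
noncomputable def tensorProductBaseChangeEquiv (k E E' L : Type*) [CommRing k] [CommRing E]
    [CommRing E'] [CommRing L] [Algebra k E] [Algebra k E'] [Algebra E E'] [IsScalarTower k E E']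
    [Algebra k L] : (E ⊗[k] L) ⊗[E] E' ≃+* E' ⊗[k] L :=
  (Algebra.TensorProduct.comm E _ _).toRingEquiv.trans
    (Algebra.TensorProduct.cancelBaseChange k E E E' L).toRingEquiv

theorem tensorProductBaseChangeEquiv_tmul_one {k E E' L : Type*} [CommRing k] [CommRing E]
    [CommRing E'] [CommRing L] [Algebra k E] [Algebra k E'] [Algebra E E'] [IsScalarTower k E E']
    [Algebra k L] (z : E ⊗[k] L) : tensorProductBaseChangeEquiv k E E' L (z ⊗ₜ 1) =
      (IsScalarTower.toAlgHom k E E').toLinearMap.rTensor L z := by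
  induction z with
  | zero => simp
  | add a b ha hb => rw [TensorProduct.add_tmul, map_add, map_add, ha, hb]
  | tmul a b => simp [tensorProductBaseChangeEquiv, Algebra.smul_def]

theorem CMDefectLE.tensorProduct_extension {k E E' L : Type*} [Field k] [Field E] [Field E']
    [Field L] [Algebra k E] [Algebra k E'] [Algebra E E'] [IsScalarTower k E E'] [Algebra k L]
    [Algebra.EssFiniteType k E] [Algebra.EssFiniteType k E'] {a b : ℕ}
    (h : CMDefectLE (E ⊗[k] L) a)
    (hE' : ∀ (p : Ideal (E ⊗[k] L)) [p.IsPrime], CMDefectLE (p.ResidueField ⊗[E] E') b) :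
    CMDefectLE (E' ⊗[k] L) (a + b) := by
  have := isNoetherianRing_tensorProduct_of_essFiniteType k E L
  have := isNoetherianRing_tensorProduct_of_essFiniteType k E' L
  have : IsNoetherianRing ((E ⊗[k] L) ⊗[E] E') :=
    isNoetherianRing_of_ringEquiv _ (tensorProductBaseChangeEquiv k E E' L).symm
  exact (h.tensorProduct_of_residueField hE').of_ringEquiv (tensorProductBaseChangeEquiv k E E' L)

open IntermediateField in
theorem CMDefectLE.intermediateField_tensorProduct {k K : Type*} (L : Type*) [Field k] [Field K]
    [Field L] [Algebra k K] [Algebra k L] (s : Finset K) :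
    CMDefectLE (adjoin k (s : Set K) ⊗[k] L) 0 := by
  refine (induction_on_adjoin_finset s
    (fun E : IntermediateField k K ↦ Algebra.EssFiniteType k E ∧ CMDefectLE (E ⊗[k] L) 0)
    ⟨?_, ?_⟩ ?_).2
  · exact essFiniteType_iff.mpr fg_bot
  · have e : L ≃+* (⊥ : IntermediateField k K) ⊗[k] L :=
      ((Algebra.TensorProduct.lid k L).symm.trans
        (Algebra.TensorProduct.congr (botEquiv k K).symm AlgEquiv.refl)).toRingEquiv
    exact .of_ringEquiv e (.of_ringKrullDim_le_zero (ringKrullDim_eq_zero_of_field L).le)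
  · rintro E x - ⟨hE, h⟩
    have hfin : Algebra.EssFiniteType k (E⟮x⟯.restrictScalars k) := by
      have : Algebra.EssFiniteType E E⟮x⟯ :=
        essFiniteType_iff.mpr (fg_adjoin_of_finite (Set.finite_singleton x))
      exact Algebra.EssFiniteType.comp k E E⟮x⟯
    refine ⟨hfin, ?_⟩
    have : Algebra.EssFiniteType k E⟮x⟯ := hfin
    exact h.tensorProduct_extension (E' := E⟮x⟯) fun p _ ↦
      CMDefectLE.tensorProduct_adjoin_simple p.ResidueField x

theorem HasDefectLE.of_flat_of_map_comap_eq {R S : Type*} [CommRing R] [CommRing S] [Algebra R S]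
    [IsNoetherianRing R] [IsNoetherianRing S] [Module.Flat R S] {d : ℕ} (hR : CMDefectLE R d)
    (P : Ideal S) [P.IsPrime] (hP : (P.under R).map (algebraMap R S) = P) :
    HasDefectLE (Localization.AtPrime P) d := by
  let _ := Localization.AtPrime.algebraOfLiesOver (P.under R) P
  have : IsLocalHom (algebraMap (Localization.AtPrime (P.under R)) (Localization.AtPrime P)) :=
    Localization.isLocalHom_localRingHom ..
  refine HasDefectLE.of_flat_of_isLocalHom (b := 0) (hR (P.under R)) ?_
  have hmax : (maximalIdeal (Localization.AtPrime (P.under R))).map (algebraMap _ _) =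
      maximalIdeal (Localization.AtPrime P) := by
    rw [← Localization.AtPrime.map_eq_maximalIdeal, ← Localization.AtPrime.map_eq_maximalIdeal,
      Ideal.map_map, ← IsScalarTower.algebraMap_eq, IsScalarTower.algebraMap_eq R S,
      ← Ideal.map_map, hP]
  rw [hmax]
  exact ⟨[], .nil _ _, (ringKrullDim_eq_zero_of_field (ResidueField (Localization.AtPrime P))).le⟩

theorem HasDefectLE.tensorProduct_of_le_span_range {k K E L : Type*} [Field k] [Field K] [Field E]
    [Field L] [Algebra k K] [Algebra k E] [Algebra E K] [IsScalarTower k E K] [Algebra k L]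
    [IsNoetherianRing (E ⊗[k] L)] [IsNoetherianRing (K ⊗[k] L)] {d : ℕ}
    (hE : CMDefectLE (E ⊗[k] L) d) {G : Set (K ⊗[k] L)} [hP : (Ideal.span G).IsPrime]
    (hG : ∀ g ∈ G, ∃ z, (IsScalarTower.toAlgHom k E K).toLinearMap.rTensor L z = g) :
    HasDefectLE (Localization.AtPrime (Ideal.span G)) d := by
  generalize hGP : Ideal.span G = P at *
  let e := tensorProductBaseChangeEquiv k E K L
  have : IsNoetherianRing ((E ⊗[k] L) ⊗[E] K) := isNoetherianRing_of_ringEquiv _ e.symm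
  refine (HasDefectLE.of_flat_of_map_comap_eq hE (P.comap e) ?_).of_ringEquiv
      (Localization.localRingEquiv (P.comap e) P e rfl)
  refine le_antisymm Ideal.map_comap_le fun z hz ↦ ?_
  suffices P ≤ (((P.comap e).under (E ⊗[k] L)).map (algebraMap _ _)).comap e.symm by
    simpa using this hz
  rw [← hGP, Ideal.span_le, hGP]
  intro g hg
  obtain ⟨v, hv⟩ := hG g hg
  have hv' : e (v ⊗ₜ 1) = g := by rw [tensorProductBaseChangeEquiv_tmul_one, ← hv]
  rw [SetLike.mem_coe, Ideal.mem_comap, ← hv', RingEquiv.symm_apply_apply]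
  refine Ideal.mem_map_of_mem _ ?_
  rw [Ideal.mem_comap, Ideal.mem_comap]
  change e (v ⊗ₜ 1) ∈ P
  exact hv' ▸ hGP ▸ Ideal.subset_span hg

open IntermediateField in
theorem CMDefectLE.tensorProduct_field (k K L : Type*) [Field k] [Field K] [Field L] [Algebra k K]
    [Algebra k L] [IsNoetherianRing (K ⊗[k] L)] : CMDefectLE (K ⊗[k] L) 0 := by
  intro P _
  obtain ⟨G, rfl⟩ := IsNoetherian.noetherian P
  obtain ⟨V, hV, hGV⟩ := TensorProduct.exists_finite_submodule_left_of_setFinite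
    (G : Set (K ⊗[k] L)) G.finite_toSet
  obtain ⟨s, hs⟩ := Module.Finite.iff_fg.mp hV
  have hVE : V ≤ (adjoin k (s : Set K)).toSubalgebra.toSubmodule := by
    rw [← hs, Submodule.span_le]
    exact subset_adjoin k _
  have : Algebra.EssFiniteType k (adjoin k (s : Set K)) :=
    essFiniteType_iff.mpr (fg_adjoin_finset s)
  have := isNoetherianRing_tensorProduct_of_essFiniteType k (adjoin k (s : Set K)) L
  refine HasDefectLE.tensorProduct_of_le_span_range
    (CMDefectLE.intermediateField_tensorProduct L s) fun g hg ↦ ?_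
  obtain ⟨v, rfl⟩ := hGV hg
  let i : V →ₗ[k] adjoin k (s : Set K) := Submodule.inclusion hVE
  refine ⟨i.rTensor L v, ?_⟩
  rw [← LinearMap.comp_apply, ← LinearMap.rTensor_comp]
  rfl

theorem CMDefectLE.tensorProduct {k A B : Type*} [Field k] [CommRing A] [CommRing B] [Algebra k A]
    [Algebra k B] [IsNoetherianRing A] [IsNoetherianRing B] [IsNoetherianRing (A ⊗[k] B)] {a b : ℕ}
    (hA : CMDefectLE A a) (hB : CMDefectLE B b) : CMDefectLE (A ⊗[k] B) (a + b) := by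
  refine hA.tensorProduct_of_residueField fun p _ ↦ ?_
  have := isNoetherianRing_residueField_tensorProduct (k := k) (K := B) p
  have e := (Algebra.TensorProduct.comm k p.ResidueField B).toRingEquiv
  have : IsNoetherianRing (B ⊗[k] p.ResidueField) := isNoetherianRing_of_ringEquiv _ e
  refine CMDefectLE.of_ringEquiv e.symm (hB.tensorProduct_of_residueField (b := 0) fun q _ ↦ ?_)
  have := isNoetherianRing_residueField_tensorProduct (k := k) (K := p.ResidueField) q
  exact .tensorProduct_field k _ _

end

section

open IsLocalRing RingTheory.Sequence CategoryTheory Abelian Limits Pointwise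

lemma Ideal.smul_top_quotSMulTop_ne_top {R M : Type*} [CommRing R] [AddCommGroup M] [Module R M]
    {I : Ideal R} {r : R} (hr : r ∈ I) (hI : I • (⊤ : Submodule R M) ≠ ⊤) :
    I • (⊤ : Submodule R (QuotSMulTop r M)) ≠ ⊤ := by
  by_contra eq
  absurd congrArg (Submodule.comap (Submodule.mkQ _)) eq
  simpa [Submodule.comap_smul_top_of_surjective I _ (Submodule.mkQ_surjective _),
    Submodule.smul_mono_left ((Ideal.span_singleton_le_iff_mem I).mpr hr),
    ← Submodule.ideal_span_singleton_smul] using hI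

lemma RingTheory.Sequence.exists_isRegular_quotSMulTop {R : Type u} [CommRing R]
    [IsNoetherianRing R] {I : Ideal R} {M : Type u} [AddCommGroup M] [Module R M]
    [Module.Finite R M] (hI : I • (⊤ : Submodule R M) ≠ ⊤) {x : R} (hxI : x ∈ I)
    (hx : IsSMulRegular M x) {ys : List R} (hysI : ∀ y ∈ ys, y ∈ I) (hys : IsRegular M ys) :
    ∃ zs : List R, zs.length = ys.length - 1 ∧ (∀ z ∈ zs, z ∈ I) ∧
      IsRegular (QuotSMulTop x M) zs := by
  have hsupp : Module.support R (ModuleCat.of R (R ⧸ I)) = PrimeSpectrum.zeroLocus I :=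
    (Module.support_eq_zeroLocus (R := R) (M := R ⧸ I)).trans (by rw [Ideal.annihilator_quotient])
  have : Module.Finite R (ModuleCat.of R M) := ‹_›
  have hext := ModuleCat.subsingleton_ext_of_exists_isRegular I (ModuleCat.of R (R ⧸ I))
    hsupp.subset (ModuleCat.of R M) hI.lt_top ys hysI hys
  refine ModuleCat.exists_isRegular_of_exists_subsingleton_ext I _
    (ModuleCat.of R (QuotSMulTop x M)) (Ideal.smul_top_quotSMulTop_ne_top hxI hI).lt_top
    (ModuleCat.of R (R ⧸ I)) hsupp fun i hi ↦ ?_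
  have hx' : IsSMulRegular (ModuleCat.of R M) x := hx
  have zero1 := AddCommGrpCat.isZero_of_iff_subsingleton.mpr (hext i (by omega))
  have zero2 := AddCommGrpCat.isZero_of_iff_subsingleton.mpr (hext (i + 1) (by omega))
  exact AddCommGrpCat.subsingleton_of_isZero <| ShortComplex.Exact.isZero_of_both_zeros
    ((Ext.covariant_sequence_exact₃' (ModuleCat.of R (R ⧸ I)) hx'.smulShortComplex_shortExact)
      i (i + 1) rfl) (zero1.eq_zero_of_src _) (zero2.eq_zero_of_tgt _)

lemma RingTheory.Sequence.exists_isSMulRegular_of_length_lt {R : Type u} [CommRing R]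
    [IsNoetherianRing R] {I : Ideal R} {M : Type u} [AddCommGroup M] [Module R M]
    [Module.Finite R M] (hI : I • (⊤ : Submodule R M) ≠ ⊤) {xs ys : List R}
    (hxsI : ∀ x ∈ xs, x ∈ I) (hxs : IsWeaklyRegular M xs)
    (hysI : ∀ y ∈ ys, y ∈ I) (hys : IsRegular M ys) (hlen : xs.length < ys.length) :
    ∃ z ∈ I, IsSMulRegular (M ⧸ Ideal.ofList xs • (⊤ : Submodule R M)) z := by
  induction xs generalizing M ys with
  | nil =>
    cases ys with
    | nil => simp at hlen
    | cons y ys =>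
      refine ⟨y, hysI y (by simp), ?_⟩
      rw [(Submodule.quotEquivOfEqBot (Ideal.ofList [] • (⊤ : Submodule R M))
        (by simp)).isSMulRegular_congr]
      exact ((isRegular_cons_iff M y ys).mp hys).1
  | cons x xs ih =>
    rw [isWeaklyRegular_cons_iff] at hxs
    have hxI := hxsI x (by simp)
    obtain ⟨zs, hzlen, hzI, hz⟩ := exists_isRegular_quotSMulTop hI hxI hxs.1 hysI hys
    obtain ⟨z, hz, hreg⟩ := ih (Ideal.smul_top_quotSMulTop_ne_top hxI hI)
      (fun a ha ↦ hxsI a (by simp [ha])) hxs.2 hzI hz (by simp at hlen; omega)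
    refine ⟨z, hz, ?_⟩
    rwa [(Submodule.quotOfListConsSMulTopEquivQuotSMulTopInner M x xs).isSMulRegular_congr]

end

section

open IsLocalRing RingTheory.Sequence

theorem Ideal.mem_associatedPrimes_quotient_iff {R : Type*} [CommRing R] [IsNoetherianRing R]
    {J P : Ideal R} :
    P ∈ associatedPrimes R (R ⧸ J) ↔ P.IsPrime ∧ ∃ a, ∀ r, r ∈ P ↔ r * a ∈ J := by
  rw [AssociatedPrimes.mem_iff, isAssociatedPrime_iff,
    (Ideal.Quotient.mk_surjective (I := J)).exists]
  refine and_congr_right fun _ ↦ exists_congr fun a ↦ ?_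
  rw [Ideal.ext_iff]
  refine forall_congr' fun r ↦ iff_congr Iff.rfl ?_
  rw [Submodule.mem_colon_singleton, Submodule.mem_bot, ← Ideal.Quotient.eq_zero_iff_mem]
  rfl

theorem Ideal.exists_isSMulRegular_quotient_iff {R : Type*} [CommRing R] [IsNoetherianRing R]
    {I J : Ideal R} :
    (∃ z ∈ I, IsSMulRegular (R ⧸ J) z) ↔ ∀ Q ∈ associatedPrimes R (R ⧸ J), ¬ I ≤ Q := by
  have h := Ideal.subset_union_prime_finite (associatedPrimes.finite R (R ⧸ J)) (f := id) ⊥ ⊥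
    (fun Q hQ _ _ ↦ hQ.isPrime) (I := I)
  simp only [id] at h
  rw [biUnion_associatedPrimes_eq_compl_regular, Set.subset_compl_iff_disjoint_right,
    Set.disjoint_left] at h
  have := not_congr h
  simpa using this

section AtPrime

variable {R : Type*} [CommRing R] [IsNoetherianRing R] {P : Ideal R} [P.IsPrime]

theorem IsLocalization.AtPrime.maximalIdeal_mem_associatedPrimes_quotient_map_iff {J : Ideal R} :
    maximalIdeal (Localization.AtPrime P) ∈ associatedPrimes (Localization.AtPrime P)
      (Localization.AtPrime P ⧸ J.map (algebraMap R (Localization.AtPrime P))) ↔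
    P ∈ associatedPrimes R (R ⧸ J) := by
  set S := Localization.AtPrime P
  have : IsNoetherianRing S := IsLocalization.isNoetherianRing P.primeCompl _ inferInstance
  have hmem := IsLocalization.algebraMap_mem_map_algebraMap_iff P.primeCompl S J
  rw [Ideal.mem_associatedPrimes_quotient_iff, Ideal.mem_associatedPrimes_quotient_iff]
  constructor
  · rintro ⟨-, b, hb⟩
    refine ⟨‹_›, ?_⟩
    obtain ⟨a, s, rfl⟩ := IsLocalization.exists_mk'_eq P.primeCompl b
    have ha : ∀ r, r ∈ P ↔ ∃ m ∈ P.primeCompl, m * (r * a) ∈ J := by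
      intro r
      rw [← IsLocalization.AtPrime.to_map_mem_maximal_iff S P r, hb, ← hmem, map_mul,
        ← Ideal.mul_unit_mem_iff_mem _ (IsLocalization.map_units S s), mul_assoc,
        IsLocalization.mk'_spec]
    obtain ⟨t, ht, htP⟩ : ∃ t ∈ P.primeCompl, ∀ r ∈ P, t * (r * a) ∈ J := by
      have key : ∀ I : Ideal R, I ≤ P → ∃ t ∈ P.primeCompl, ∀ r ∈ I, t * (r * a) ∈ J := by
        intro I
        induction I, (IsNoetherian.noetherian I : I.FG) using Submodule.fg_induction with
        | singleton x =>
          intro hx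
          obtain ⟨t, ht, h⟩ := (ha x).mp (hx (Submodule.mem_span_singleton_self x))
          refine ⟨t, ht, fun r hr ↦ ?_⟩
          obtain ⟨c, rfl⟩ := Submodule.mem_span_singleton.mp hr
          have := J.mul_mem_left c h
          convert this using 1
          rw [smul_eq_mul]; ring
        | sup I₁ I₂ _ _ h₁ h₂ =>
          intro h
          obtain ⟨t₁, ht₁, H₁⟩ := h₁ (le_sup_left.trans h)
          obtain ⟨t₂, ht₂, H₂⟩ := h₂ (le_sup_right.trans h)
          refine ⟨t₁ * t₂, mul_mem ht₁ ht₂, fun r hr ↦ ?_⟩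
          obtain ⟨r₁, hr₁, r₂, hr₂, rfl⟩ := Submodule.mem_sup.mp hr
          have := J.add_mem (J.mul_mem_left t₂ (H₁ r₁ hr₁)) (J.mul_mem_left t₁ (H₂ r₂ hr₂))
          convert this using 1
          ring
      exact key P le_rfl
    refine ⟨t * a, fun r ↦ ⟨fun hr ↦ by convert htP r hr using 1; ring, fun hr ↦ ?_⟩⟩
    exact (ha r).mpr ⟨t, ht, by convert hr using 1; ring⟩
  · rintro ⟨hP, a, ha⟩
    refine ⟨inferInstance, algebraMap R S a, fun z ↦ ?_⟩
    obtain ⟨r, s, rfl⟩ := IsLocalization.exists_mk'_eq P.primeCompl z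
    rw [IsLocalization.AtPrime.mk'_mem_maximal_iff S P r s,
      ← Ideal.mul_unit_mem_iff_mem _ (IsLocalization.map_units S s), mul_right_comm,
      IsLocalization.mk'_spec, ← map_mul, hmem]
    constructor
    · exact fun hr ↦ ⟨1, one_mem _, by simpa using (ha r).mp hr⟩
    · rintro ⟨m, hm, h⟩
      rw [← mul_assoc, ← ha] at h
      exact (hP.mem_or_mem h).resolve_left hm

end AtPrime

end

section

open IsLocalRing RingTheory.Sequence

theorem Ideal.mem_associatedPrimes_quotient_ofList_iff {R : Type*} [CommRing R]
    [IsNoetherianRing R] {P : Ideal R} [P.IsPrime] {xs : List R} (hxs : IsWeaklyRegular R xs)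
    (hxsP : ∀ x ∈ xs, x ∈ P) :
    P ∈ associatedPrimes R (R ⧸ Ideal.ofList xs) ↔
      ∀ ys : List (Localization.AtPrime P), IsRegular (Localization.AtPrime P) ys →
        ys.length ≤ xs.length := by
  rw [← IsLocalization.AtPrime.maximalIdeal_mem_associatedPrimes_quotient_map_iff, Ideal.map_ofList]
  set S := Localization.AtPrime P
  have : IsNoetherianRing S := IsLocalization.isNoetherianRing P.primeCompl _ inferInstance
  have hxs' := hxs.isRegular_of_isLocalization_of_mem S P hxsP
  have hxm : ∀ x ∈ xs.map (algebraMap R S), x ∈ maximalIdeal S :=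
    fun x hx ↦ hxs'.mem_maximalIdeal hx
  generalize hzs : xs.map (algebraMap R S) = zs at *
  rw [show xs.length = zs.length by simp [← hzs]]
  have htop : Ideal.ofList zs • (⊤ : Ideal S) = Ideal.ofList zs := by simp
  constructor
  · intro hm ys hys
    by_contra! hlt
    have hI : maximalIdeal S • (⊤ : Ideal S) ≠ ⊤ := by
      simpa using Ideal.IsPrime.ne_top'
    have h := exists_isSMulRegular_of_length_lt hI hxm hxs'.toIsWeaklyRegular
      (fun y hy ↦ hys.mem_maximalIdeal hy) hys (by simpa using hlt)
    rw [htop, Ideal.exists_isSMulRegular_quotient_iff] at h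
    exact h _ hm le_rfl
  · intro h
    by_contra hm
    obtain ⟨z, hz, hzreg⟩ : ∃ z ∈ maximalIdeal S, IsSMulRegular (S ⧸ Ideal.ofList zs) z := by
      rw [Ideal.exists_isSMulRegular_quotient_iff]
      intro Q hQ hle
      have := hQ.isPrime
      exact hm ((maximalIdeal.isMaximal S).eq_of_le this.ne_top hle ▸ hQ)
    rw [← htop] at hzreg
    have hreg : IsRegular S (zs ++ [z]) := by
      rw [isRegular_iff_isWeaklyRegular_of_subset_maximalIdeal, isWeaklyRegular_append_iff,
        isWeaklyRegular_singleton_iff]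
      · exact ⟨hxs'.toIsWeaklyRegular, hzreg⟩
      · simpa [or_imp, forall_and] using ⟨hxm, hz⟩
    simpa using h _ hreg

end

section

open IsLocalRing RingTheory.Sequence TensorProduct

section Depth

variable {A : Type u} [CommRing A]

theorem length_le_idealDepth {I : Ideal A} {M : Type v} [AddCommGroup M] [Module A M]
    {rs : List A} (hmem : ∀ r ∈ rs, r ∈ I) (hreg : IsRegular M rs) :
    (rs.length : ℕ∞) ≤ idealDepth A I M :=
  le_sSup ⟨rs, rfl, hmem, hreg⟩

theorem exists_isRegular_length_eq_idealDepth {I : Ideal A} {M : Type v} [AddCommGroup M]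
    [Module A M] [Nontrivial M] (h : idealDepth A I M < ⊤) :
    ∃ rs : List A, (rs.length : ℕ∞) = idealDepth A I M ∧ (∀ r ∈ rs, r ∈ I) ∧ IsRegular M rs := by
  have : Nonempty {n : ℕ∞ | ∃ rs : List A, (rs.length : ℕ∞) = n ∧ (∀ r ∈ rs, r ∈ I) ∧
      RingTheory.Sequence.IsRegular M rs} :=
    ⟨0, [], rfl, by simp, RingTheory.Sequence.IsRegular.nil A M⟩
  exact ENat.sSup_mem_of_nonempty_of_lt_top h

theorem idealDepth_mono {I J : Ideal A} (hIJ : I ≤ J) (M : Type v) [AddCommGroup M] [Module A M] :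
    idealDepth A I M ≤ idealDepth A J M :=
  sSup_le_sSup fun _ ⟨rs, hlen, hmem, hreg⟩ ↦ ⟨rs, hlen, fun r hr ↦ hIJ (hmem r hr), hreg⟩

/-- The localization of a ring at a prime, as a localized module. -/
noncomputable def localizedModuleAtPrimeEquiv (P : PrimeSpectrum A) :
    LocalizedModule P.asIdeal.primeCompl A ≃ₗ[Localization.AtPrime P.asIdeal]
      Localization.AtPrime P.asIdeal :=
  (IsLocalizedModule.iso P.asIdeal.primeCompl
    (Algebra.linearMap A (Localization.AtPrime P.asIdeal))).extendScalarsOfIsLocalization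
      P.asIdeal.primeCompl (Localization.AtPrime P.asIdeal)

theorem depthAt_self (P : PrimeSpectrum A) :
    depthAt A A P = localDepth (Localization.AtPrime P.asIdeal)
      (Localization.AtPrime P.asIdeal) := by
  simp only [depthAt, localDepth, idealDepth,
    (localizedModuleAtPrimeEquiv P).isRegular_congr]

theorem heightAt_self (P : PrimeSpectrum A) :
    heightAt A A P = ringKrullDim (Localization.AtPrime P.asIdeal) := by
  rw [heightAt, supportDim, (localizedModuleAtPrimeEquiv P).support_eq,
    ← Module.supportDim_self_eq_ringKrullDim, Module.supportDim]

theorem mem_support_self (P : PrimeSpectrum A) : P ∈ Module.support A A := by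
  rw [Module.support_of_algebra, PrimeSpectrum.mem_zeroLocus]
  intro x hx
  rw [show x = 0 from hx]
  exact P.asIdeal.zero_mem

theorem length_le_depthAt {P : PrimeSpectrum A} {ys : List (Localization.AtPrime P.asIdeal)}
    (hys : IsRegular (Localization.AtPrime P.asIdeal) ys) :
    (ys.length : ℕ∞) ≤ depthAt A A P := by
  rw [depthAt_self]
  exact length_le_idealDepth (fun _ hy ↦ hys.mem_maximalIdeal hy) hys

theorem idealDepth_le_depthAt (P : PrimeSpectrum A) :
    idealDepth A P.asIdeal A ≤ depthAt A A P := by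
  refine sSup_le ?_
  rintro _ ⟨rs, rfl, hmem, hreg⟩
  simpa using length_le_depthAt (hreg.toIsWeaklyRegular.isRegular_of_isLocalization_of_mem
    (Localization.AtPrime P.asIdeal) P.asIdeal hmem)

variable [IsNoetherianRing A]

theorem depthAt_le_height (P : PrimeSpectrum A) : depthAt A A P ≤ P.asIdeal.height := by
  rw [depthAt_self]
  refine sSup_le ?_
  rintro _ ⟨rs, rfl, -, hreg⟩
  have : IsNoetherianRing (Localization.AtPrime P.asIdeal) :=
    IsLocalization.isNoetherianRing P.asIdeal.primeCompl _ inferInstance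
  have h := ringKrullDim_add_length_eq_ringKrullDim_of_isRegular rs hreg
  rw [IsLocalization.AtPrime.ringKrullDim_eq_height P.asIdeal
    (Localization.AtPrime P.asIdeal)] at h
  have : Nontrivial (Localization.AtPrime P.asIdeal ⧸ Ideal.ofList rs) := by
    rw [Ideal.Quotient.nontrivial_iff]
    simpa using hreg.top_ne_smul.symm
  have h0 := ringKrullDim_nonneg_of_nontrivial
    (R := Localization.AtPrime P.asIdeal ⧸ Ideal.ofList rs)
  have : ((rs.length : ℕ∞) : WithBot ℕ∞) ≤ (P.asIdeal.height : WithBot ℕ∞) := by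
    rw [← h]
    simpa using add_le_add_left h0 ((rs.length : ℕ∞) : WithBot ℕ∞)
  exact_mod_cast this

theorem depthAt_lt_top (P : PrimeSpectrum A) : depthAt A A P < ⊤ :=
  (depthAt_le_height P).trans_lt (Ideal.height_lt_top P.2.ne_top)

theorem exists_isRegular_length_eq_depthAt (P : PrimeSpectrum A) :
    ∃ ys : List (Localization.AtPrime P.asIdeal), IsRegular (Localization.AtPrime P.asIdeal) ys ∧
      (ys.length : ℕ∞) = depthAt A A P := by
  have h := depthAt_lt_top P
  rw [depthAt_self] at h ⊢
  obtain ⟨ys, hlen, -, hreg⟩ := exists_isRegular_length_eq_idealDepth h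
  exact ⟨ys, hreg, hlen⟩

theorem IsCMRing.cmDefectLE (h : IsCMRing A) : CMDefectLE A 0 := by
  intro P hP
  obtain ⟨ys, hreg, hlen⟩ := exists_isRegular_length_eq_depthAt ⟨P, hP⟩
  have := h ⟨P, hP⟩ (mem_support_self _)
  rw [heightAt_self, ← hlen] at this
  exact ⟨ys, hreg, by simpa using this.ge⟩

theorem IsAlmostCMRing.cmDefectLE (h : IsAlmostCMRing A) : CMDefectLE A 1 := by
  intro P hP
  have : Nontrivial A := PrimeSpectrum.nonempty_iff_nontrivial.mp ⟨⟨P, hP⟩⟩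
  obtain ⟨xs, hlen, hmem, hreg⟩ := exists_isRegular_length_eq_idealDepth
    ((idealDepth_le_depthAt ⟨P, hP⟩).trans_lt (depthAt_lt_top ⟨P, hP⟩))
  have hass : ∀ Q : Ideal A, Q.IsPrime → Ideal.ofList xs ≤ Q → Q ≤ P →
      Q ∈ associatedPrimes A (A ⧸ Ideal.ofList xs) := by
    intro Q hQ hxsQ hQP
    rw [Ideal.mem_associatedPrimes_quotient_ofList_iff hreg.toIsWeaklyRegular
      fun x hx ↦ hxsQ (Ideal.subset_span hx)]
    intro ys hys
    have h₁ := length_le_depthAt (P := ⟨Q, hQ⟩) hys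
    rw [← h ⟨Q, hQ⟩ (mem_support_self _)] at h₁
    exact_mod_cast (h₁.trans (idealDepth_mono hQP A)).trans_eq hlen.symm
  obtain ⟨z, hzP, hz⟩ : ∃ z ∈ P, ∀ Q ∈ associatedPrimes A (A ⧸ Ideal.ofList xs),
      ¬ P ≤ Q → z ∉ Q := by
    have hav := Ideal.subset_union_prime_finite
      ((associatedPrimes.finite A (A ⧸ Ideal.ofList xs)).subset (Set.sep_subset _ (¬ P ≤ ·)))
      (f := id) ⊥ ⊥ (fun Q hQ _ _ ↦ hQ.1.isPrime) (I := P)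
    have : ¬ (P : Set A) ⊆ ⋃ Q ∈ {Q ∈ associatedPrimes A (A ⧸ Ideal.ofList xs) | ¬ P ≤ Q},
        (id Q : Ideal A) := by
      rw [hav]
      rintro ⟨Q, hQ, hle⟩
      exact hQ.2 hle
    obtain ⟨z, hzP, hz⟩ := Set.not_subset.mp this
    exact ⟨z, hzP, fun Q hQ hPQ hzQ ↦ hz (Set.mem_biUnion (x := Q) ⟨hQ, hPQ⟩ hzQ)⟩
  classical
  have hmin : P ∈ (Ideal.span (insert z xs.toFinset : Finset A)).minimalPrimes := by
    refine ⟨⟨hP, Ideal.span_le.mpr fun x hx ↦ ?_⟩, fun Q ⟨hQ, hle⟩ hQP ↦ ?_⟩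
    · simp only [Finset.coe_insert, List.coe_toFinset, Set.mem_insert_iff, Set.mem_ofPred_eq] at hx
      rcases hx with rfl | hx
      exacts [hzP, hmem x hx]
    · by_contra hPQ
      refine hz Q (hass Q hQ (Ideal.span_le.mpr fun x hx ↦ ?_) hQP) hPQ ?_
      · exact hle (Ideal.subset_span (by simpa using Or.inr hx))
      · exact hle (Ideal.subset_span (by simp))
  refine ⟨_, hreg.toIsWeaklyRegular.isRegular_of_isLocalization_of_mem
    (Localization.AtPrime P) P hmem, ?_⟩
  rw [IsLocalization.AtPrime.ringKrullDim_eq_height P, List.length_map]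
  have hcard : (insert z xs.toFinset).card ≤ xs.length + 1 :=
    (Finset.card_insert_le _ _).trans (Nat.succ_le_succ xs.toFinset_card_le)
  have := (Ideal.height_le_card_of_mem_minimalPrimes_span_finset hmin).trans
    (Nat.cast_le.mpr hcard)
  exact_mod_cast this

theorem CMDefectLE.isAlmostCMRing (h : CMDefectLE A 1) : IsAlmostCMRing A := by
  intro P _
  have : Nontrivial A := PrimeSpectrum.nonempty_iff_nontrivial.mp ⟨P⟩
  refine (idealDepth_le_depthAt P).antisymm ?_
  obtain ⟨xs, hlen, hmem, hreg⟩ := exists_isRegular_length_eq_idealDepth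
    ((idealDepth_le_depthAt P).trans_lt (depthAt_lt_top P))
  obtain ⟨Q, hQ, hPQ⟩ : ∃ Q ∈ associatedPrimes A (A ⧸ Ideal.ofList xs), P.asIdeal ≤ Q := by
    by_contra! hcon
    obtain ⟨z, hzP, hz⟩ := Ideal.exists_isSMulRegular_quotient_iff.mpr hcon
    have hmem' : ∀ r ∈ xs ++ [z], r ∈ P.asIdeal := by
      simpa [or_imp, forall_and] using ⟨hmem, hzP⟩
    have hreg' : IsRegular A (xs ++ [z]) := by
      rw [RingTheory.Sequence.isRegular_iff, isWeaklyRegular_append_iff,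
        isWeaklyRegular_singleton_iff]
      refine ⟨⟨hreg.toIsWeaklyRegular, ?_⟩, fun htop ↦ P.2.ne_top (top_le_iff.mp ?_)⟩
      · rwa [smul_eq_mul, Ideal.mul_top]
      · rw [htop, smul_eq_mul, Ideal.mul_top]
        exact Ideal.span_le.mpr hmem'
    have := length_le_idealDepth hmem' hreg'
    rw [← hlen, Nat.cast_le, List.length_append, List.length_singleton] at this
    omega
  have := hQ.isPrime
  have hle := (Ideal.mem_associatedPrimes_quotient_ofList_iff hreg.toIsWeaklyRegular
    fun x hx ↦ hPQ (hmem x hx)).mp hQ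
  rw [← hlen]
  rcases hPQ.eq_or_lt with rfl | hlt
  · obtain ⟨ys, hys, hylen⟩ := exists_isRegular_length_eq_depthAt P
    rw [← hylen]
    exact_mod_cast hle ys hys
  · obtain ⟨ys, hys, hdim⟩ := h Q
    rw [IsLocalization.AtPrime.ringKrullDim_eq_height Q] at hdim
    have h₁ : Q.height ≤ (ys.length + 1 : ℕ) := by exact_mod_cast hdim
    have h₂ : P.asIdeal.height + 1 ≤ (xs.length : ℕ∞) + 1 :=
      ((Ideal.height_add_one_le_of_lt_of_isPrime hlt).trans h₁).trans
        (by exact_mod_cast Nat.succ_le_succ (hle ys hys))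
    exact (depthAt_le_height P).trans ((ENat.add_le_add_iff_right ENat.one_ne_top).mp h₂)

end Depth

end

theorem tensor_almostCM_of_almostCM_and_CM (k : Type u) [Field k]
    (A : Type v) (B : Type w) [CommRing A] [CommRing B] [Algebra k A] [Algebra k B]
    [IsNoetherianRing A] [IsNoetherianRing B] [IsNoetherianRing (A ⊗[k] B)]
    (hA : IsAlmostCMRing A) (hB : IsAlmostCMRing B)
    (hCM : IsCMRing A ∨ IsCMRing B) : IsAlmostCMRing (A ⊗[k] B) := by
  rcases hCM with h | h
  · exact (h.cmDefectLE.tensorProduct hB.cmDefectLE).isAlmostCMRing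
  · exact (hA.cmDefectLE.tensorProduct h.cmDefectLE).isAlmostCMRing

end
end

section
/- Let u : A → B be a morphism of noetherian rings, M a finitely generated A-module, N a finitely generated B-module which is flat as an A-module, and n a natural number. Consider M ⊗_A N as a B-module. If M satisfies Serre's condition (S_n) and for every P ∈ Spec(A) the fiber module N_P/PN_P satisfies (S_n) as a module over B_P/PB_P, then M ⊗_A N satisfies Serre's condition (S_n) as a B-module. -/
noncomputable section

open TensorProduct

universe u v w





variable (A : Type u) [CommRing A] (B : Type u) [CommRing B] [Algebra A B]

/-- The image in `B` of the complement of a prime `P` of `A`, as a submonoid of `B`. -/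
noncomputable def fiberSubmonoid (P : PrimeSpectrum A) : Submonoid B :=
  Submonoid.map (algebraMap A B) P.asIdeal.primeCompl

/-- `PB_P` : the extension of the prime `P` of `A` to the localization `B_P` of `B`
at (the image of) the complement of `P`. -/
noncomputable def fiberIdeal (P : PrimeSpectrum A) :
    Ideal (Localization (fiberSubmonoid A B P)) :=
  Ideal.map ((algebraMap B (Localization (fiberSubmonoid A B P))).comp (algebraMap A B))
    P.asIdeal

/-- The fiber ring `B_P / P B_P` of `A → B` at a prime `P` of `A`. -/
noncomputable def fiberRing (P : PrimeSpectrum A) : Type u :=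
  Localization (fiberSubmonoid A B P) ⧸ fiberIdeal A B P

noncomputable instance (P : PrimeSpectrum A) : CommRing (fiberRing A B P) :=
  inferInstanceAs (CommRing (Localization (fiberSubmonoid A B P) ⧸ fiberIdeal A B P))

/-- The fiber module `N_P / P N_P` of a `B`-module `N` at a prime `P` of `A`. -/
noncomputable def fiberModule (P : PrimeSpectrum A)
    (N : Type u) [AddCommGroup N] [Module B N] : Type u :=
  LocalizedModule (fiberSubmonoid A B P) N ⧸
    (fiberIdeal A B P •
      (⊤ : Submodule (Localization (fiberSubmonoid A B P))
        (LocalizedModule (fiberSubmonoid A B P) N)))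

noncomputable instance (P : PrimeSpectrum A) (N : Type u) [AddCommGroup N] [Module B N] :
    AddCommGroup (fiberModule A B P N) :=
  inferInstanceAs (AddCommGroup (LocalizedModule (fiberSubmonoid A B P) N ⧸
    (fiberIdeal A B P •
      (⊤ : Submodule (Localization (fiberSubmonoid A B P))
        (LocalizedModule (fiberSubmonoid A B P) N)))))

/-- `N_P / P N_P` is a module over the fiber ring `B_P / P B_P`. -/
noncomputable instance (P : PrimeSpectrum A) (N : Type u) [AddCommGroup N] [Module B N] :
    Module (fiberRing A B P) (fiberModule A B P N) :=
  inferInstanceAs (Module (Localization (fiberSubmonoid A B P) ⧸ fiberIdeal A B P)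
    (LocalizedModule (fiberSubmonoid A B P) N ⧸
      (fiberIdeal A B P •
        (⊤ : Submodule (Localization (fiberSubmonoid A B P))
          (LocalizedModule (fiberSubmonoid A B P) N)))))








/-- The canonical `B`-module structure on `M ⊗[A] N`, where `N` is a `B`-module,
given by `b • (m ⊗ n) = m ⊗ (b • n)`. -/
noncomputable instance tensorRightModule (A : Type u) [CommRing A] (B : Type u) [CommRing B]
    [Algebra A B] (M : Type u) [AddCommGroup M] [Module A M]
    (N : Type u) [AddCommGroup N] [Module A N] [Module B N] [IsScalarTower A B N] :
    Module B (M ⊗[A] N) where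
  smul b x := (TensorProduct.comm A M N).symm (b • TensorProduct.comm A M N x)
  one_smul x := by
    show (TensorProduct.comm A M N).symm ((1 : B) • TensorProduct.comm A M N x) = x
    simp
  mul_smul a b x := by
    show (TensorProduct.comm A M N).symm ((a * b) • TensorProduct.comm A M N x) =
      (TensorProduct.comm A M N).symm (a • TensorProduct.comm A M N
        ((TensorProduct.comm A M N).symm (b • TensorProduct.comm A M N x)))
    simp [mul_smul]
  smul_zero b := by
    show (TensorProduct.comm A M N).symm (b • TensorProduct.comm A M N 0) = 0
    simp
  smul_add b x y := by
    show (TensorProduct.comm A M N).symm (b • TensorProduct.comm A M N (x + y)) =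
      (TensorProduct.comm A M N).symm (b • TensorProduct.comm A M N x) +
      (TensorProduct.comm A M N).symm (b • TensorProduct.comm A M N y)
    simp
  add_smul a b x := by
    show (TensorProduct.comm A M N).symm ((a + b) • TensorProduct.comm A M N x) =
      (TensorProduct.comm A M N).symm (a • TensorProduct.comm A M N x) +
      (TensorProduct.comm A M N).symm (b • TensorProduct.comm A M N x)
    simp [add_smul]
  zero_smul x := by
    show (TensorProduct.comm A M N).symm ((0 : B) • TensorProduct.comm A M N x) = 0
    simp

section TensorRegular

attribute [local instance] TensorProduct.leftModule TensorProduct.instModule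

open IsLocalRing RingTheory.Sequence Pointwise

variable {R S : Type*} [CommRing R] [CommRing S] [Algebra R S]
  {M : Type*} [AddCommGroup M] [Module R M]
  {N : Type*} [AddCommGroup N] [Module R N] [Module S N] [IsScalarTower R S N]

instance Module.Finite.tensorProduct_tower [Module.Finite S N] [Module.Finite R M] :
    Module.Finite S (N ⊗[R] M) :=
  Module.Finite.equiv (AlgebraTensorModule.cancelBaseChange R S S N M)

/-- Base change to `N` of the quotient map `M → M / I M` has kernel `(I S) (N ⊗ M)`. -/
lemma TensorProduct.ker_lTensor_mkQ_smul_top (I : Ideal R) :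
    LinearMap.ker (AlgebraTensorModule.lTensor S N (I • ⊤ : Submodule R M).mkQ) =
      (I.map (algebraMap R S) • ⊤ : Submodule S (N ⊗[R] M)) := by
  apply le_antisymm
  · intro x hx
    have hex : Function.Exact ((I • ⊤ : Submodule R M).subtype.lTensor N)
        ((I • ⊤ : Submodule R M).mkQ.lTensor N) :=
      lTensor_exact N (LinearMap.exact_subtype_mkQ _) (Submodule.mkQ_surjective _)
    obtain ⟨y, rfl⟩ := (hex x).mp hx
    clear hx hex
    induction y with
    | zero => simp
    | add y z hy hz => rw [map_add]; exact add_mem hy hz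
    | tmul n m =>
      obtain ⟨m, hm⟩ := m
      rw [LinearMap.lTensor_tmul, Submodule.subtype_apply]
      dsimp only
      induction hm using Submodule.smul_induction_on' with
      | smul r hr m _ =>
        rw [TensorProduct.tmul_smul, ← algebraMap_smul S r (n ⊗ₜ[R] m)]
        exact Submodule.smul_mem_smul (Ideal.mem_map_of_mem _ hr) trivial
      | add y _ z _ hy hz => rw [TensorProduct.tmul_add]; exact add_mem hy hz
  · rw [Submodule.smul_le]
    intro s hs x hx
    clear hx
    induction hs using Submodule.span_induction with
    | mem s hs =>
      obtain ⟨r, hr, rfl⟩ := hs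
      rw [LinearMap.mem_ker, algebraMap_smul, LinearMap.map_smul_of_tower]
      induction x with
      | zero => simp
      | add y z hy hz => rw [map_add, smul_add, hy, hz, add_zero]
      | tmul n m =>
        rw [AlgebraTensorModule.lTensor_tmul, ← TensorProduct.tmul_smul, ← map_smul,
          Submodule.mkQ_apply, (Submodule.Quotient.mk_eq_zero _).mpr, TensorProduct.tmul_zero]
        exact Submodule.smul_mem_smul hr trivial
    | zero => simp
    | add s t _ _ hs ht => rw [add_smul]; exact add_mem hs ht
    | smul a s _ hs => rw [smul_assoc]; exact Submodule.smul_mem _ _ hs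

lemma TensorProduct.lTensor_mkQ_surjective (I : Ideal R) :
    Function.Surjective (AlgebraTensorModule.lTensor S N (I • ⊤ : Submodule R M).mkQ) :=
  LinearMap.lTensor_surjective N (Submodule.mkQ_surjective _)

/-- `N ⊗ M` modulo `I S` is `N ⊗ (M / I M)`. -/
def TensorProduct.quotMapSMulTopEquiv (I : Ideal R) :
    ((N ⊗[R] M) ⧸ (I.map (algebraMap R S) • ⊤ : Submodule S (N ⊗[R] M))) ≃ₗ[S]
      N ⊗[R] (M ⧸ (I • ⊤ : Submodule R M)) :=
  (Submodule.quotEquivOfEq _ _ (ker_lTensor_mkQ_smul_top I).symm).trans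
    ((AlgebraTensorModule.lTensor S N (I • ⊤ : Submodule R M).mkQ).quotKerEquivOfSurjective
      (lTensor_mkQ_surjective I))

section RTensor

variable {N' : Type*} [AddCommGroup N'] [Module R N'] [Module S N'] [IsScalarTower R S N']

lemma TensorProduct.algebraTensorModule_rTensor_surjective {p : N →ₗ[S] N'}
    (hp : Function.Surjective p) :
    Function.Surjective (AlgebraTensorModule.rTensor R M p) :=
  LinearMap.rTensor_surjective M (g := p.restrictScalars R) hp

/-- If `p : N → N'` is a quotient map with kernel `s N`, then `N ⊗ M → N' ⊗ M` has kernel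
`s (N ⊗ M)`. -/
lemma TensorProduct.ker_rTensor_of_ker_eq_smul_top {p : N →ₗ[S] N'}
    (hp : Function.Surjective p) {s : S} (hker : LinearMap.ker p = s • ⊤) :
    LinearMap.ker (AlgebraTensorModule.rTensor R M p) = (s • ⊤ : Submodule S (N ⊗[R] M)) := by
  have hex : Function.Exact (Algebra.lsmul R R N s) (p.restrictScalars R) := fun n ↦ by
    change n ∈ LinearMap.ker p ↔ _
    rw [hker, Submodule.mem_smul_pointwise_iff_exists]
    simp
  ext x
  rw [Submodule.mem_smul_pointwise_iff_exists]
  refine (rTensor_exact M hex hp x).trans ?_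
  simp only [Submodule.mem_top, true_and]
  exact Iff.rfl

/-- `N ⊗ M` modulo `s` is `N' ⊗ M` when `N'` is the quotient of `N` modulo `s`. -/
def TensorProduct.quotSMulTopEquivRTensor {p : N →ₗ[S] N'}
    (hp : Function.Surjective p) {s : S} (hker : LinearMap.ker p = s • ⊤) :
    QuotSMulTop s (N ⊗[R] M) ≃ₗ[S] N' ⊗[R] M :=
  (Submodule.quotEquivOfEq _ _ (ker_rTensor_of_ker_eq_smul_top hp hker).symm).trans
    ((AlgebraTensorModule.rTensor R M p).quotKerEquivOfSurjective
      (algebraTensorModule_rTensor_surjective hp))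

end RTensor

variable [IsLocalRing R]
  {F : Type*} [AddCommGroup F] [Module S F]

/-- An element regular on the closed fiber of a flat module stays regular after tensoring with a
module killed by the maximal ideal. -/
lemma IsSMulRegular.tensor_of_maximalIdeal_smul_eq_bot
    {f : N →ₗ[S] F} (hf : Function.Surjective f)
    (hker : LinearMap.ker f = (maximalIdeal R).map (algebraMap R S) • ⊤)
    {s : S} (hs : IsSMulRegular F s) (hM : (maximalIdeal R • ⊤ : Submodule R M) = ⊥) :
    IsSMulRegular (N ⊗[R] M) s := by
  classical
  have htors : Module.IsTorsionBySet R M (maximalIdeal R : Set R) := by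
    intro x r
    have : (r : R) • x ∈ (maximalIdeal R • ⊤ : Submodule R M) :=
      Submodule.smul_mem_smul r.2 trivial
    rwa [hM, Submodule.mem_bot] at this
  let _ : Module (ResidueField R) M := htors.module
  have : IsScalarTower R (ResidueField R) M := htors.isScalarTower
  let b := Module.Basis.ofVectorSpace (ResidueField R) M
  let e₁ : N ⊗[R] M ≃ₗ[S] N ⊗[R] (_ →₀ ResidueField R) :=
    AlgebraTensorModule.congr (LinearEquiv.refl S N) (b.repr.restrictScalars R)
  let e₂ := TensorProduct.finsuppRight R S N (ResidueField R)
    (Module.Basis.ofVectorSpaceIndex (ResidueField R) M)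
  let e₃ : N ⊗[R] (R ⧸ (maximalIdeal R • ⊤ : Submodule R R)) ≃ₗ[S] F :=
    (quotMapSMulTopEquiv (maximalIdeal R)).symm.trans <|
      (Submodule.Quotient.equiv _ _ (AlgebraTensorModule.rid R S N) (by
        rw [Submodule.map_smul'', Submodule.map_top, LinearEquiv.range, hker])).trans
      (f.quotKerEquivOfSurjective hf)
  have hR : (maximalIdeal R • ⊤ : Submodule R R) = maximalIdeal R := by simp
  let e₄ : N ⊗[R] (ResidueField R) ≃ₗ[S] F :=
    (AlgebraTensorModule.congr (LinearEquiv.refl S N)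
      (Submodule.quotEquivOfEq _ _ hR.symm)).trans e₃
  rw [e₁.isSMulRegular_congr, e₂.isSMulRegular_congr]
  intro x y hxy
  ext i
  exact (e₄.isSMulRegular_congr s).mpr hs (DFunLike.congr_fun hxy i)

lemma IsSMulRegular.tensor_of_maximalIdeal_pow_smul_eq_bot [Module.Flat R N]
    {f : N →ₗ[S] F} (hf : Function.Surjective f)
    (hker : LinearMap.ker f = (maximalIdeal R).map (algebraMap R S) • ⊤)
    {s : S} (hs : IsSMulRegular F s) (k : ℕ)
    (hM : (maximalIdeal R ^ k • ⊤ : Submodule R M) = ⊥) :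
    IsSMulRegular (N ⊗[R] M) s := by
  induction k generalizing M with
  | zero =>
    have : Subsingleton M := by
      rw [pow_zero, Ideal.one_eq_top, Submodule.top_smul] at hM
      exact (Submodule.subsingleton_iff R).mp (subsingleton_of_bot_eq_top hM.symm)
    exact fun x y _ ↦ Subsingleton.elim x y
  | succ k ih =>
    set K : Submodule R M := maximalIdeal R • ⊤
    have h₁ : IsSMulRegular (N ⊗[R] K) s := by
      apply ih
      apply Submodule.map_injective_of_injective K.injective_subtype
      rw [Submodule.map_smul'', Submodule.map_top, Submodule.range_subtype, Submodule.map_bot,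
        ← hM, pow_succ, Submodule.mul_smul]
    have h₂ : IsSMulRegular (N ⊗[R] (M ⧸ K)) s := by
      apply tensor_of_maximalIdeal_smul_eq_bot hf hker hs
      rw [← Submodule.range_mkQ K, ← Submodule.map_top, ← Submodule.map_smul'',
        Submodule.mkQ_map_self]
    refine isSMulRegular_of_range_eq_ker
      (f := AlgebraTensorModule.lTensor S N K.subtype)
      (g := AlgebraTensorModule.lTensor S N K.mkQ) ?_ ?_ h₁ h₂
    · exact Module.Flat.lTensor_preserves_injective_linearMap _ K.injective_subtype
    · ext x
      exact (lTensor_exact N (LinearMap.exact_subtype_mkQ K) (Submodule.mkQ_surjective _) x).symm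

variable [IsNoetherianRing S] [IsLocalRing S] [IsLocalHom (algebraMap R S)]

/-- An element regular on the closed fiber of a flat module `N` is regular on `N ⊗ M` for every
finitely generated `M`. -/
lemma IsSMulRegular.tensor_of_closedFiber [Module.Flat R N] [Module.Finite S N]
    [Module.Finite R M] {f : N →ₗ[S] F} (hf : Function.Surjective f)
    (hker : LinearMap.ker f = (maximalIdeal R).map (algebraMap R S) • ⊤)
    {s : S} (hs : IsSMulRegular F s) :
    IsSMulRegular (N ⊗[R] M) s := by
  refine IsSMulRegular.of_right_eq_zero_of_smul fun x hx ↦ ?_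
  rw [← Submodule.mem_bot S, ← Ideal.iInf_pow_smul_eq_bot_of_isLocalRing (M := N ⊗[R] M)
    (maximalIdeal S) (maximalIdeal.isMaximal S).ne_top, Submodule.mem_iInf]
  intro k
  have hreg : IsSMulRegular (N ⊗[R] (M ⧸ (maximalIdeal R ^ k • ⊤ : Submodule R M))) s := by
    apply tensor_of_maximalIdeal_pow_smul_eq_bot hf hker hs k
    rw [← Submodule.range_mkQ, ← Submodule.map_top, ← Submodule.map_smul'',
      Submodule.mkQ_map_self]
  have hx' : x ∈ LinearMap.ker
      (AlgebraTensorModule.lTensor S N (maximalIdeal R ^ k • ⊤ : Submodule R M).mkQ) := by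
    rw [LinearMap.mem_ker]
    apply hreg.right_eq_zero_of_smul
    rw [← map_smul, hx, map_zero]
  rw [TensorProduct.ker_lTensor_mkQ_smul_top, Ideal.map_pow] at hx'
  refine Submodule.smul_mono_left (Ideal.pow_right_mono ?_ k) hx'
  exact ((local_hom_TFAE (algebraMap R S)).out 0 2).mp ‹_›

/-- If `s` is regular on the closed fiber of the flat module `N` then `N / s N` is flat. -/
lemma Module.Flat.of_ker_eq_smul_top_of_closedFiber [IsNoetherianRing R] [Module.Flat R N]
    [Module.Finite S N] {f : N →ₗ[S] F} (hf : Function.Surjective f)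
    (hker : LinearMap.ker f = (maximalIdeal R).map (algebraMap R S) • ⊤)
    {s : S} (hs : IsSMulRegular F s)
    {N' : Type*} [AddCommGroup N'] [Module R N'] [Module S N'] [IsScalarTower R S N']
    {p : N →ₗ[S] N'} (hp : Function.Surjective p) (hpker : LinearMap.ker p = s • ⊤) :
    Module.Flat R N' := by
  refine Module.Flat.iff_lTensor_injective.mpr fun I _ ↦ ?_
  rw [← LinearMap.ker_eq_bot, LinearMap.ker_eq_bot']
  intro x hx
  obtain ⟨y, rfl⟩ := TensorProduct.algebraTensorModule_rTensor_surjective hp x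
  have hy : AlgebraTensorModule.lTensor S N I.subtype y ∈
      LinearMap.ker (AlgebraTensorModule.rTensor R R p) := by
    rw [LinearMap.mem_ker, ← hx]
    exact LinearMap.congr_fun ((LinearMap.rTensor_comp_lTensor ..).trans
      (LinearMap.lTensor_comp_rTensor N (p.restrictScalars R) I.subtype).symm) y
  rw [TensorProduct.ker_rTensor_of_ker_eq_smul_top hp hpker,
    Submodule.mem_smul_pointwise_iff_exists] at hy
  obtain ⟨z, -, hz⟩ := hy
  have hex : Function.Exact (I.subtype.lTensor N) ((Submodule.mkQ I).lTensor N) :=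
    _root_.lTensor_exact N (LinearMap.exact_subtype_mkQ I) (Submodule.mkQ_surjective I)
  have hz' : AlgebraTensorModule.lTensor S N (Submodule.mkQ I) z = 0 := by
    apply (IsSMulRegular.tensor_of_closedFiber (M := R ⧸ I) hf hker hs).right_eq_zero_of_smul
    rw [← map_smul, hz]
    exact (hex _).mpr ⟨y, rfl⟩
  obtain ⟨w, rfl⟩ := (hex z).mp hz'
  have hyw : y = s • w := by
    apply Module.Flat.lTensor_preserves_injective_linearMap (M := N) I.subtype I.injective_subtype
    refine hz.symm.trans ?_
    exact ((AlgebraTensorModule.lTensor S N I.subtype).map_smul s w).symm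
  rw [← LinearMap.mem_ker, TensorProduct.ker_rTensor_of_ker_eq_smul_top hp hpker, hyw]
  exact Submodule.smul_mem_pointwise_smul _ _ _ trivial

/-- A sequence weakly regular on the closed fiber of a flat module `N` is weakly regular on
`N ⊗ M` for every finitely generated `M`. -/
lemma RingTheory.Sequence.IsWeaklyRegular.tensor_of_closedFiber [IsNoetherianRing R]
    [Module.Flat R N] [Module.Finite S N]
    [Module.Finite R M] {f : N →ₗ[S] F} (hf : Function.Surjective f)
    (hker : LinearMap.ker f = (maximalIdeal R).map (algebraMap R S) • ⊤)
    {ss : List S} (hs : IsWeaklyRegular F ss) :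
    IsWeaklyRegular (N ⊗[R] M) ss := by
  induction ss generalizing N F with
  | nil => exact .nil S _
  | cons s ss ih =>
    rw [isWeaklyRegular_cons_iff] at hs ⊢
    refine ⟨hs.1.tensor_of_closedFiber hf hker, ?_⟩
    let p := (s • ⊤ : Submodule S N).mkQ
    have hp : Function.Surjective p := Submodule.mkQ_surjective _
    have hpker : LinearMap.ker p = s • ⊤ := Submodule.ker_mkQ _
    have := Module.Flat.of_ker_eq_smul_top_of_closedFiber hf hker hs.1 hp hpker
    rw [(TensorProduct.quotSMulTopEquivRTensor (M := M) hp hpker).isWeaklyRegular_congr]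
    refine ih (f := QuotSMulTop.map s f) (QuotSMulTop.map_surjective s hf) ?_ hs.2
    apply le_antisymm
    · intro x hx
      obtain ⟨y, rfl⟩ := hp x
      have hy : f y ∈ (s • ⊤ : Submodule S F) := (Submodule.Quotient.mk_eq_zero _).mp hx
      rw [Submodule.mem_smul_pointwise_iff_exists] at hy
      obtain ⟨z, -, hz⟩ := hy
      obtain ⟨w, rfl⟩ := hf z
      have hyw : y - s • w ∈ LinearMap.ker f := by simp [← hz]
      have hpy : p y = p (y - s • w) := by
        have : p (s • w) = 0 := by
          rw [← LinearMap.mem_ker, hpker]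
          exact Submodule.smul_mem_pointwise_smul _ _ _ trivial
        rw [map_sub, this, sub_zero]
      rw [hker] at hyw
      rw [hpy]
      have := Submodule.mem_map_of_mem (f := p) hyw
      rw [Submodule.map_smul''] at this
      exact Submodule.smul_mono le_rfl le_top this
    · rw [Submodule.smul_le]
      intro a ha x _
      obtain ⟨y, rfl⟩ := hp x
      have hy : f (a • y) = 0 := by
        rw [← LinearMap.mem_ker, hker]
        exact Submodule.smul_mem_smul ha trivial
      rw [← map_smul]
      change Submodule.Quotient.mk (f (a • y)) = 0
      rw [hy, Submodule.Quotient.mk_zero]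

/-- Concatenating a weakly `M`-regular sequence with a sequence weakly regular on the closed fiber
of `N` gives a weakly regular sequence on `N ⊗ M`. -/
lemma RingTheory.Sequence.IsWeaklyRegular.tensor_append [IsNoetherianRing R]
    [Module.Flat R N] [Module.Finite S N]
    [Module.Finite R M] {f : N →ₗ[S] F} (hf : Function.Surjective f)
    (hker : LinearMap.ker f = (maximalIdeal R).map (algebraMap R S) • ⊤)
    {rs : List R} (hr : IsWeaklyRegular M rs) {ss : List S} (hs : IsWeaklyRegular F ss) :
    IsWeaklyRegular (N ⊗[R] M) (rs.map (algebraMap R S) ++ ss) := by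
  rw [isWeaklyRegular_append_iff, isWeaklyRegular_map_algebraMap_iff, ← Ideal.map_ofList,
    (TensorProduct.quotMapSMulTopEquiv _).isWeaklyRegular_congr]
  exact ⟨hr.isWeaklyRegular_lTensor, hs.tensor_of_closedFiber hf hker⟩

end TensorRegular

section DepthDimension

attribute [local instance] TensorProduct.leftModule TensorProduct.instModule

open IsLocalRing RingTheory.Sequence

lemma TensorProduct.nontrivial_left (R N M : Type*) [CommRing R] [AddCommGroup N] [Module R N]
    [AddCommGroup M] [Module R M] [Nontrivial (N ⊗[R] M)] : Nontrivial N := by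
  by_contra h
  rw [not_nontrivial_iff_subsingleton] at h
  exact not_subsingleton (N ⊗[R] M) inferInstance

lemma TensorProduct.nontrivial_right (R N M : Type*) [CommRing R] [AddCommGroup N] [Module R N]
    [AddCommGroup M] [Module R M] [Nontrivial (N ⊗[R] M)] : Nontrivial M := by
  by_contra h
  rw [not_nontrivial_iff_subsingleton] at h
  exact not_subsingleton (N ⊗[R] M) inferInstance

lemma Module.supportDim_closedFiber_eq {S : Type*} [CommRing S] {N : Type*} [AddCommGroup N]
    [Module S N] [Module.Finite S N] {F : Type*} [AddCommGroup F] [Module S F] {f : N →ₗ[S] F}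
    (hf : Function.Surjective f)
    {I : Ideal S} (hker : LinearMap.ker f = I • ⊤) :
    Module.supportDim S F = ringKrullDim (S ⧸ (I ⊔ Module.annihilator S N)) := by
  have e : (N ⧸ (I • ⊤ : Submodule S N)) ≃ₗ[S] F :=
    (Submodule.quotEquivOfEq _ _ hker.symm).trans (f.quotKerEquivOfSurjective hf)
  rw [← Module.supportDim_eq_of_equiv e, ringKrullDim_quotient, PrimeSpectrum.zeroLocus_sup,
    Module.supportDim, Module.support_quotient, Module.support_eq_zeroLocus, Set.inter_comm]

/-- **Nakayama**: a nonzero finitely generated module over a local ring has nonzero reduction modulo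
a proper ideal. -/
lemma nontrivial_of_ker_eq_smul_top {S : Type*} [CommRing S] [IsLocalRing S] {N : Type*}
    [AddCommGroup N] [Module S N] [Module.Finite S N] [Nontrivial N] {F : Type*} [AddCommGroup F]
    [Module S F] {I : Ideal S} (hI : I ≤ maximalIdeal S) {f : N →ₗ[S] F}
    (hker : LinearMap.ker f = I • ⊤) : Nontrivial F := by
  by_contra hF
  rw [not_nontrivial_iff_subsingleton] at hF
  have hbot : (⊤ : Submodule S N) = ⊥ := by
    refine Submodule.eq_bot_of_le_smul_of_le_jacobson_bot I ⊤ Module.Finite.fg_top ?_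
      (hI.trans (maximalIdeal_le_jacobson ⊥))
    rw [← hker]
    exact fun x _ ↦ Subsingleton.elim _ _
  exact top_ne_bot hbot

lemma localDepth_set_nonempty (R : Type*) [CommRing R] [IsLocalRing R] (M : Type*)
    [AddCommGroup M] [Module R M] [Nontrivial M] :
    {n : ℕ∞ | ∃ rs : List R, (rs.length : ℕ∞) = n ∧ (∀ r ∈ rs, r ∈ maximalIdeal R) ∧
      IsRegular M rs}.Nonempty :=
  ⟨0, [], by simp, by simp, .nil R M⟩

variable {R S : Type*} [CommRing R] [CommRing S] [Algebra R S]
  [IsLocalRing R] [IsLocalRing S] [IsLocalHom (algebraMap R S)]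
  {M : Type*} [AddCommGroup M] [Module R M]
  {N : Type*} [AddCommGroup N] [Module R N] [Module S N] [IsScalarTower R S N]
  {F : Type*} [AddCommGroup F] [Module S F]

/-- Depth is superadditive for tensoring with a flat module. -/
lemma localDepth_add_localDepth_le [IsNoetherianRing R] [IsNoetherianRing S]
    [Module.Finite R M] [Module.Finite S N] [Module.Flat R N] [Nontrivial (N ⊗[R] M)]
    [Nontrivial M] [Nontrivial F] {f : N →ₗ[S] F} (hf : Function.Surjective f)
    (hker : LinearMap.ker f = (maximalIdeal R).map (algebraMap R S) • ⊤) :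
    localDepth R M + localDepth S F ≤ localDepth S (N ⊗[R] M) := by
  rw [localDepth, localDepth, idealDepth, idealDepth,
    ENat.sSup_add (localDepth_set_nonempty R M)]
  refine iSup₂_le fun a ha ↦ ?_
  rw [ENat.add_sSup (localDepth_set_nonempty S F)]
  refine iSup₂_le fun b hb ↦ ?_
  obtain ⟨rs, rfl, hrs, hr⟩ := ha
  obtain ⟨ss, rfl, hss, hs⟩ := hb
  have hmem : ∀ t ∈ rs.map (algebraMap R S) ++ ss, t ∈ maximalIdeal S := by
    intro t ht
    rcases List.mem_append.mp ht with ht | ht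
    · obtain ⟨r, hr, rfl⟩ := List.mem_map.mp ht
      exact map_maximalIdeal_le _ (Ideal.mem_map_of_mem _ (hrs r hr))
    · exact hss t ht
  refine le_sSup ⟨rs.map (algebraMap R S) ++ ss, by simp, hmem, ?_⟩
  exact IsRegular.of_isWeaklyRegular_of_mem_maximalIdeal (N ⊗[R] M) hmem
    (hr.toIsWeaklyRegular.tensor_append hf hker hs.toIsWeaklyRegular)

/-- The dimension inequality for a local homomorphism. -/
lemma ringKrullDim_le_ringKrullDim_add_closedFiber [IsNoetherianRing R] [IsNoetherianRing S] :
    ringKrullDim S ≤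
      ringKrullDim R + ringKrullDim (S ⧸ (maximalIdeal R).map (algebraMap R S)) := by
  have hcomap : (maximalIdeal S).comap (algebraMap R S) = maximalIdeal R :=
    ((local_hom_TFAE (algebraMap R S)).out 0 4).mp ‹_›
  have : (maximalIdeal S).LiesOver (maximalIdeal R) := ⟨hcomap.symm⟩
  have hprime : ((maximalIdeal S).map
      (Ideal.Quotient.mk ((maximalIdeal R).map (algebraMap R S)))).IsPrime :=
    Ideal.map_isPrime_of_surjective Ideal.Quotient.mk_surjective
      (by rw [Ideal.mk_ker]; exact map_maximalIdeal_le _)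
  rw [← maximalIdeal_height_eq_ringKrullDim, ← maximalIdeal_height_eq_ringKrullDim]
  have h := Ideal.height_le_height_add_of_liesOver (maximalIdeal R) (maximalIdeal S)
  refine (WithBot.coe_le_coe.mpr h).trans ?_
  rw [WithBot.coe_add]
  gcongr
  exact Ideal.height_le_ringKrullDim_of_isPrime

/-- The dimension inequality for modules over a local homomorphism. -/
lemma Module.supportDim_tensor_le [IsNoetherianRing R] [IsNoetherianRing S]
    [Module.Finite R M] [Module.Finite S N] [Nontrivial (N ⊗[R] M)] {f : N →ₗ[S] F}
    (hf : Function.Surjective f)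
    (hker : LinearMap.ker f = (maximalIdeal R).map (algebraMap R S) • ⊤) :
    Module.supportDim S (N ⊗[R] M) ≤ Module.supportDim R M + Module.supportDim S F := by
  let I := Module.annihilator R M
  let J := I.map (algebraMap R S) ⊔ Module.annihilator S N
  have hJ : J ≤ Module.annihilator S (N ⊗[R] M) := by
    refine sup_le (Ideal.map_le_iff_le_comap.mpr fun a ha ↦ ?_) fun a ha ↦ ?_
    · rw [Ideal.mem_comap, Module.mem_annihilator]
      intro x
      rw [algebraMap_smul]
      induction x with
      | zero => simp
      | tmul y m => rw [← TensorProduct.tmul_smul, Module.mem_annihilator.mp ha, tmul_zero]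
      | add x y hx hy => rw [smul_add, hx, hy, add_zero]
    · rw [Module.mem_annihilator]
      intro x
      induction x with
      | zero => simp
      | tmul y m => rw [TensorProduct.smul_tmul', Module.mem_annihilator.mp ha, zero_tmul]
      | add x y hx hy => rw [smul_add, hx, hy, add_zero]
  have hIJ : I ≤ J.comap (algebraMap R S) := Ideal.map_le_iff_le_comap.mp le_sup_left
  have hJtop : J ≠ ⊤ := fun h ↦ by
    rw [h, top_le_iff, Module.annihilator_eq_top_iff] at hJ
    exact not_subsingleton (N ⊗[R] M) hJ
  have : Nontrivial (S ⧸ J) := Ideal.Quotient.nontrivial_iff.mpr hJtop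
  have : Nontrivial (R ⧸ I) := Ideal.Quotient.nontrivial_iff.mpr
    fun h ↦ hJtop (Ideal.comap_eq_top_iff.mp (top_le_iff.mp (h ▸ hIJ)))
  have hlocI : IsLocalHom (Ideal.Quotient.mk I) := .of_surjective _ Ideal.Quotient.mk_surjective
  have hlocJ : IsLocalHom (Ideal.Quotient.mk J) := .of_surjective _ Ideal.Quotient.mk_surjective
  have : IsLocalRing (R ⧸ I) := .of_surjective' _ Ideal.Quotient.mk_surjective
  have : IsLocalRing (S ⧸ J) := .of_surjective' _ Ideal.Quotient.mk_surjective
  let : Algebra (R ⧸ I) (S ⧸ J) := (Ideal.quotientMap J (algebraMap R S) hIJ).toAlgebra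
  have halg (r : R) : algebraMap (R ⧸ I) (S ⧸ J) (Ideal.Quotient.mk I r) =
      Ideal.Quotient.mk J (algebraMap R S r) := rfl
  have : IsLocalHom (algebraMap (R ⧸ I) (S ⧸ J)) := ⟨fun x hx ↦ by
    obtain ⟨r, rfl⟩ := Ideal.Quotient.mk_surjective x
    rw [halg] at hx
    exact (isUnit_of_map_unit (algebraMap R S) _ (isUnit_of_map_unit _ _ hx)).map _⟩
  have hcl : ringKrullDim ((S ⧸ J) ⧸ (maximalIdeal (R ⧸ I)).map (algebraMap (R ⧸ I) (S ⧸ J))) ≤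
      Module.supportDim S F := by
    rw [Module.supportDim_closedFiber_eq hf hker]
    let g := (Ideal.Quotient.mk ((maximalIdeal (R ⧸ I)).map
      (algebraMap (R ⧸ I) (S ⧸ J)))).comp (Ideal.Quotient.mk J)
    have hg : Function.Surjective g :=
      Ideal.Quotient.mk_surjective.comp Ideal.Quotient.mk_surjective
    refine ringKrullDim_le_of_surjective (Ideal.Quotient.lift _ g ?_)
      (Ideal.Quotient.lift_surjective_of_surjective _ _ hg)
    change _ ≤ RingHom.ker g
    refine sup_le (Ideal.map_le_iff_le_comap.mpr fun a ha ↦ ?_) fun a ha ↦ ?_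
    · rw [Ideal.mem_comap, RingHom.mem_ker, RingHom.comp_apply, ← halg,
        Ideal.Quotient.eq_zero_iff_mem]
      refine Ideal.mem_map_of_mem _ fun h ↦ ha (isUnit_of_map_unit _ _ h)
    · rw [RingHom.mem_ker, RingHom.comp_apply,
        Ideal.Quotient.eq_zero_iff_mem.mpr (show a ∈ J from Ideal.mem_sup_right ha), map_zero]
  calc Module.supportDim S (N ⊗[R] M)
    _ = ringKrullDim (S ⧸ Module.annihilator S (N ⊗[R] M)) :=
      Module.supportDim_eq_ringKrullDim_quotient_annihilator S _
    _ ≤ ringKrullDim (S ⧸ J) :=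
      ringKrullDim_le_of_surjective (Ideal.Quotient.factor hJ) (Ideal.Quotient.factor_surjective hJ)
    _ ≤ _ := ringKrullDim_le_ringKrullDim_add_closedFiber (R := R ⧸ I)
    _ ≤ _ := by
      rw [Module.supportDim_eq_ringKrullDim_quotient_annihilator R M]
      gcongr

lemma min_le_of_le_add {n a b c : WithBot ℕ∞} {x y z : ℕ∞} (hc : c ≤ a + b)
    (hx : min n a ≤ x) (hy : min n b ≤ y) (hz : x + y ≤ z) : min n c ≤ z := by
  have hxz : (x : WithBot ℕ∞) ≤ z := WithBot.coe_le_coe.mpr (le_self_add.trans hz)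
  have hyz : (y : WithBot ℕ∞) ≤ z := WithBot.coe_le_coe.mpr (le_add_self.trans hz)
  rcases le_total n a with ha | ha
  · rw [min_eq_left ha] at hx
    exact (min_le_left _ _).trans (hx.trans hxz)
  rcases le_total n b with hb | hb
  · rw [min_eq_left hb] at hy
    exact (min_le_left _ _).trans (hy.trans hyz)
  rw [min_eq_right ha] at hx
  rw [min_eq_right hb] at hy
  refine (min_le_right _ _).trans (hc.trans ((add_le_add hx hy).trans ?_))
  exact_mod_cast hz

/-- The local form of the ascent of Serre's condition along a flat module. -/
lemma min_supportDim_le_localDepth_tensor [IsNoetherianRing R] [IsNoetherianRing S]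
    [Module.Finite R M] [Module.Finite S N] [Module.Flat R N] [Nontrivial (N ⊗[R] M)]
    {f : N →ₗ[S] F} (hf : Function.Surjective f)
    (hker : LinearMap.ker f = (maximalIdeal R).map (algebraMap R S) • ⊤) {n : WithBot ℕ∞}
    (hM : min n (supportDim R M) ≤ localDepth R M)
    (hF : min n (supportDim S F) ≤ localDepth S F) :
    min n (supportDim S (N ⊗[R] M)) ≤ localDepth S (N ⊗[R] M) := by
  have : Nontrivial M := TensorProduct.nontrivial_right R N M
  have : Nontrivial N := TensorProduct.nontrivial_left R N M
  have : Nontrivial F := nontrivial_of_ker_eq_smul_top (map_maximalIdeal_le _) hker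
  exact min_le_of_le_add (Module.supportDim_tensor_le hf hker) hM hF
    (localDepth_add_localDepth_le hf hker)

end DepthDimension

section Transfer

open IsLocalRing RingTheory.Sequence

/-- Depth can be computed after restricting scalars along a surjection of local rings. -/
lemma localDepth_le_of_surjective {S C : Type*} [CommRing S] [CommRing C] [IsLocalRing S]
    [IsLocalRing C] [Algebra S C] (h : Function.Surjective (algebraMap S C))
    (F : Type*) [AddCommGroup F] [Module S F] [Module C F] [IsScalarTower S C F] :
    localDepth C F ≤ localDepth S F := by
  refine sSup_le ?_
  rintro _ ⟨cs, rfl, hmem, hreg⟩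
  obtain ⟨rs, rfl⟩ := List.map_surjective_iff.mpr h cs
  have hmem' : ∀ r ∈ rs, r ∈ maximalIdeal S := fun r hr hu ↦
    hmem _ (List.mem_map_of_mem hr) (hu.map _)
  refine le_sSup ⟨rs, by simp, hmem', ?_⟩
  exact ((AddEquiv.refl F).isRegular_congr (List.forall₂_map_left_iff.mpr
    (List.forall₂_same.mpr fun r _ ↦ algebraMap_smul C r))).mp hreg

/-- The dimension of a module does not change under restriction of scalars along a surjection. -/
lemma supportDim_eq_of_surjective {S C : Type*} [CommRing S] [CommRing C] [Algebra S C]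
    (h : Function.Surjective (algebraMap S C))
    (F : Type*) [AddCommGroup F] [Module S F] [Module C F] [IsScalarTower S C F]
    [Module.Finite S F] [Module.Finite C F] :
    Module.supportDim S F = Module.supportDim C F := by
  rw [Module.supportDim_eq_ringKrullDim_quotient_annihilator,
    Module.supportDim_eq_ringKrullDim_quotient_annihilator]
  have hann : Module.annihilator S F = (Module.annihilator C F).comap (algebraMap S C) := by
    ext s
    simp [Module.mem_annihilator]
  have hle := hann.le
  refine ringKrullDim_eq_of_ringEquiv (RingEquiv.ofBijective
    (Ideal.quotientMap _ (algebraMap S C) hle) ⟨?_, ?_⟩)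
  · exact Ideal.quotientMap_injective' hann.ge
  · exact Ideal.quotientMap_surjective h

lemma localDepth_congr {S : Type*} [CommRing S] [IsLocalRing S] {F : Type*} [AddCommGroup F]
    [Module S F] {G : Type*} [AddCommGroup G] [Module S G] (e : F ≃ₗ[S] G) :
    localDepth S F = localDepth S G := by
  simp only [localDepth, idealDepth, e.isRegular_congr]

lemma min_supportDim_le_localDepth_of_surjective {S C : Type*} [CommRing S] [CommRing C]
    [IsLocalRing S] [IsLocalRing C] [Algebra S C] (h : Function.Surjective (algebraMap S C))
    {F : Type*} [AddCommGroup F] [Module S F] [Module C F] [IsScalarTower S C F]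
    [Module.Finite S F] {n : WithBot ℕ∞} (hF : min n (supportDim C F) ≤ localDepth C F) :
    min n (supportDim S F) ≤ localDepth S F := by
  have : Module.Finite C F := .of_restrictScalars_finite S C F
  change min n (Module.supportDim S F) ≤ _
  rw [supportDim_eq_of_surjective h F]
  exact hF.trans (WithBot.coe_le_coe.mpr (localDepth_le_of_surjective h F))

end Transfer

section Localize

attribute [local instance] TensorProduct.leftModule TensorProduct.instModule

lemma Module.Flat.of_isLocalizedModule_tower {A B : Type*} [CommRing A] [CommRing B] [Algebra A B]
    (p : Submonoid B) {N N' : Type*} [AddCommGroup N] [Module A N] [Module B N]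
    [IsScalarTower A B N] [AddCommGroup N'] [Module A N'] [Module B N'] [IsScalarTower A B N']
    (g : N →ₗ[B] N') [IsLocalizedModule p g] [Module.Flat A N] : Module.Flat A N' := by
  rw [Module.Flat.iff_lTensor_injectiveₛ]
  intro X _ _ Y
  rw [← AlgebraTensorModule.coe_lTensor (A := B), ← IsLocalizedModule.map_lTensor (S := p) (g := g)]
  refine IsLocalizedModule.map_injective p _ _ _ ?_
  rw [AlgebraTensorModule.coe_lTensor]
  exact Module.Flat.lTensor_preserves_injective_linearMap _ Subtype.val_injective

/-- The swap `M ⊗ N ≃ N ⊗ M`, linear over the ring acting on `N`. -/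
def commTensorRight (A B : Type u) [CommRing A] [CommRing B] [Algebra A B]
    (M : Type u) [AddCommGroup M] [Module A M] (N : Type u) [AddCommGroup N] [Module A N]
    [Module B N] [IsScalarTower A B N] : M ⊗[A] N ≃ₗ[B] N ⊗[A] M where
  toFun := TensorProduct.comm A M N
  invFun := (TensorProduct.comm A M N).symm
  left_inv := (TensorProduct.comm A M N).symm_apply_apply
  right_inv := (TensorProduct.comm A M N).apply_symm_apply
  map_add' := map_add (TensorProduct.comm A M N)
  map_smul' _ _ := (TensorProduct.comm A M N).apply_symm_apply _

/-- Localization of a tensor product at a prime `Q` lying over `P`. -/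
def localizedTensorEquiv {A B : Type u} [CommRing A] [CommRing B] [Algebra A B]
    (M : Type u) [AddCommGroup M] [Module A M] (N : Type u) [AddCommGroup N] [Module A N]
    [Module B N] [IsScalarTower A B N] (p : Submonoid A) (q : Submonoid B)
    [Algebra (Localization p) (Localization q)]
    [IsScalarTower A (Localization p) (Localization q)]
    {N' : Type*} [AddCommGroup N'] [Module A N'] [Module B N'] [Module (Localization p) N']
    [Module (Localization q) N'] [IsScalarTower A B N'] [IsScalarTower A (Localization p) N']
    [IsScalarTower (Localization p) (Localization q) N'] [IsScalarTower B (Localization q) N']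
    (g : N →ₗ[B] N') [IsLocalizedModule q g] :
    LocalizedModule q (M ⊗[A] N) ≃ₗ[Localization q] N' ⊗[Localization p] LocalizedModule p M :=
  have : IsScalarTower A (Localization q) N' := .of_algebraMap_smul fun a x ↦ by
    rw [IsScalarTower.algebraMap_apply A B, algebraMap_smul, algebraMap_smul]
  (LinearEquiv.extendScalarsOfIsLocalization q (Localization q)
    (IsLocalizedModule.iso q (AlgebraTensorModule.rTensor A M g ∘ₗ
      (commTensorRight A B M N).toLinearMap))).trans
  ((AlgebraTensorModule.cancelBaseChange A (Localization p) (Localization q) N' M).symm.trans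
  (AlgebraTensorModule.congr (.refl (Localization q) N')
    (LocalizedModule.equivTensorProduct p M).symm))

end Localize

section LocalizedFiber

open IsLocalRing

/-! Let `K` be a `B`-algebra whose elements become images of elements of `B` after multiplication
by elements of a submonoid `p` of `B` that is invertible in `K`. We compare the localization of `K` at a
prime `q` with the localization of `B` at the preimage of `q`. -/

variable {B K S C : Type*} [CommRing B] [CommRing K] [CommRing S] [CommRing C]
  [Algebra B K] [Algebra B S] [Algebra K C] [Algebra B C] [Algebra S C] [IsScalarTower B K C]
  [IsScalarTower B S C] {p : Submonoid B}
  {q : Ideal K} {Q : Ideal B}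

/-- Multiplying by a unit coming from `p` moves an element outside `q` to an element of `B`
outside `Q`. -/
lemma exists_mul_eq_of_notMem (hunit : ∀ s ∈ p, IsUnit (algebraMap B K s))
    (hqQ : q.comap (algebraMap B K) = Q)
    (hK : ∀ k : K, ∃ s ∈ p, ∃ b : B, algebraMap B K s * k = algebraMap B K b) {k : K}
    (hk : k ∉ q) : ∃ s ∈ p, ∃ b ∉ Q, algebraMap B K s * k = algebraMap B K b := by
  obtain ⟨s, hs, b, hb⟩ := hK k
  refine ⟨s, hs, b, fun hbQ ↦ ?_, hb⟩
  rw [← hqQ, Ideal.mem_comap, ← hb] at hbQ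
  exact hk ((Ideal.unit_mul_mem_iff_mem q (hunit s hs)).mp hbQ)

lemma notMem_of_mem_submonoid [q.IsPrime] (hunit : ∀ s ∈ p, IsUnit (algebraMap B K s))
    (hqQ : q.comap (algebraMap B K) = Q) {s : B} (hs : s ∈ p) : s ∉ Q := fun h ↦ by
  rw [← hqQ, Ideal.mem_comap] at h
  exact Ideal.IsPrime.ne_top' (q.eq_top_of_isUnit_mem h (hunit s hs))

lemma algebraMap_surjective_of_localizedFiber [q.IsPrime] [Q.IsPrime]
    [IsLocalization.AtPrime S Q]
    [IsLocalization.AtPrime C q] (hunit : ∀ s ∈ p, IsUnit (algebraMap B K s))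
    (hqQ : q.comap (algebraMap B K) = Q)
    (hK : ∀ k : K, ∃ s ∈ p, ∃ b : B, algebraMap B K s * k = algebraMap B K b) :
    Function.Surjective (algebraMap S C) := by
  intro c
  obtain ⟨⟨k, k'⟩, hc⟩ := IsLocalization.surj q.primeCompl c
  obtain ⟨s, hs, b, hb⟩ := hK k
  obtain ⟨s', hs', b', hb'Q, hb'⟩ := exists_mul_eq_of_notMem hunit hqQ hK k'.2
  have hsb : s * b' ∉ Q := fun h ↦ (‹Q.IsPrime›.mem_or_mem h).elim
    (notMem_of_mem_submonoid hunit hqQ hs) hb'Q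
  obtain ⟨v, hv⟩ := IsLocalization.map_units S (⟨s * b', hsb⟩ : Q.primeCompl)
  have hv' : algebraMap S C ↑v = algebraMap K C (algebraMap B K (s * b')) := by
    rw [hv, ← IsScalarTower.algebraMap_apply, ← IsScalarTower.algebraMap_apply]
  refine ⟨↑v⁻¹ * algebraMap B S (s' * b), ?_⟩
  have hkey : algebraMap S C ↑v * c = algebraMap S C (algebraMap B S (s' * b)) := by
    rw [hv', ← IsScalarTower.algebraMap_apply B S C, IsScalarTower.algebraMap_apply B K C,
      map_mul (algebraMap B K), map_mul (algebraMap B K), ← hb, ← hb']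
    simp only [map_mul, ← hc]
    ring
  rw [map_mul, ← hkey, ← mul_assoc, ← map_mul, Units.inv_mul, map_one, one_mul]

variable {N N' Φ F : Type*} [AddCommGroup N] [AddCommGroup N'] [AddCommGroup Φ] [AddCommGroup F]
  [Module B N] [Module B N'] [Module S N'] [Module B Φ] [Module K Φ]
  [IsScalarTower B K Φ] [Module B F] [Module K F] [Module S F] [IsScalarTower B K F]
  [IsScalarTower B S F]
  {g : N →ₗ[B] N'} {π : N →ₗ[B] Φ} {j : Φ →ₗ[K] F} {f : N' →ₗ[S] F}

lemma surjective_of_localizedFiber [q.IsPrime] [Q.IsPrime] [IsLocalization.AtPrime S Q]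
    [IsLocalizedModule q.primeCompl j] (hunit : ∀ s ∈ p, IsUnit (algebraMap B K s))
    (hqQ : q.comap (algebraMap B K) = Q)
    (hK : ∀ k : K, ∃ s ∈ p, ∃ b : B, algebraMap B K s * k = algebraMap B K b)
    (hπ : ∀ z : Φ, ∃ s ∈ p, ∃ x : N, s • z = π x) (hf : ∀ x, f (g x) = j (π x)) :
    Function.Surjective f := by
  intro y
  obtain ⟨⟨z, k⟩, hz⟩ := IsLocalizedModule.surj q.primeCompl j y
  obtain ⟨s, hs, x, hx⟩ := hπ z
  obtain ⟨s', hs', b, hbQ, hb⟩ := exists_mul_eq_of_notMem hunit hqQ hK k.2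
  have hsb : s * b ∉ Q := fun h ↦ (‹Q.IsPrime›.mem_or_mem h).elim
    (notMem_of_mem_submonoid hunit hqQ hs) hbQ
  obtain ⟨v, hv⟩ := IsLocalization.map_units S (⟨s * b, hsb⟩ : Q.primeCompl)
  have hjB (b : B) (z : Φ) : j (b • z) = b • j z := by
    rw [← algebraMap_smul K b z, map_smul, algebraMap_smul]
  have hkey : (v : S) • y = f (g (s' • x)) := by
    rw [hv, algebraMap_smul, mul_smul, ← algebraMap_smul K b y, ← hb, mul_smul]
    change _ • _ • (k • y) = _
    rw [hz, hf, map_smul, ← hx, algebraMap_smul, hjB, hjB, smul_comm]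
  refine ⟨(↑v⁻¹ : S) • g (s' • x), ?_⟩
  rw [map_smul, ← hkey, smul_smul, Units.inv_mul, one_smul]

lemma ker_eq_of_localizedFiber [q.IsPrime] [Q.IsPrime] [IsScalarTower B S N']
    [IsLocalization.AtPrime S Q] [IsLocalizedModule Q.primeCompl g]
    [IsLocalizedModule q.primeCompl j] (hunit : ∀ s ∈ p, IsUnit (algebraMap B K s))
    (hqQ : q.comap (algebraMap B K) = Q)
    (hK : ∀ k : K, ∃ s ∈ p, ∃ b : B, algebraMap B K s * k = algebraMap B K b)
    (hf : ∀ x, f (g x) = j (π x)) {I : Ideal B} (hI : ∀ a ∈ I, algebraMap B K a = 0)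
    (hπ : ∀ x, π x = 0 → ∃ s ∈ p, s • x ∈ (I • ⊤ : Submodule B N)) :
    LinearMap.ker f = I.map (algebraMap B S) • ⊤ := by
  have hjB (b : B) (z : Φ) : j (b • z) = b • j z := by
    rw [← algebraMap_smul K b z, map_smul, algebraMap_smul]
  apply le_antisymm
  · intro y hy
    obtain ⟨⟨x, t⟩, hx⟩ := IsLocalizedModule.surj Q.primeCompl g y
    change (t : B) • y = g x at hx
    have hx0 : j (π x) = 0 := by
      rw [← hf, ← hx, ← algebraMap_smul S, map_smul, LinearMap.mem_ker.mp hy, smul_zero]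
    obtain ⟨k, hk⟩ := (IsLocalizedModule.eq_zero_iff q.primeCompl j).mp hx0
    change (k : K) • π x = 0 at hk
    obtain ⟨s, hs, b, hbQ, hb⟩ := exists_mul_eq_of_notMem hunit hqQ hK k.2
    have hbx : π (b • x) = 0 := by
      rw [map_smul, ← algebraMap_smul K, ← hb, mul_smul, hk, smul_zero]
    obtain ⟨s', hs', hmem⟩ := hπ _ hbx
    have hsQ := notMem_of_mem_submonoid hunit hqQ hs'
    have hnot : s' * b * t ∉ Q := fun h ↦ (‹Q.IsPrime›.mem_or_mem h).elim
      (fun h ↦ (‹Q.IsPrime›.mem_or_mem h).elim hsQ hbQ) t.2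
    obtain ⟨v, hv⟩ := IsLocalization.map_units S (⟨s' * b * t, hnot⟩ : Q.primeCompl)
    have hvy : (v : S) • y = g (s' • b • x) := by
      rw [hv, algebraMap_smul, mul_smul, mul_smul, hx, map_smul, map_smul]
    have hgmem : ∀ w ∈ (I • ⊤ : Submodule B N),
        g w ∈ (I.map (algebraMap B S) • ⊤ : Submodule S N') := by
      intro w hw
      induction hw using Submodule.smul_induction_on' with
      | smul a ha n _ =>
        rw [map_smul, ← algebraMap_smul S a (g n)]
        exact Submodule.smul_mem_smul (Ideal.mem_map_of_mem _ ha) trivial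
      | add x _ y _ hx hy => rw [map_add]; exact add_mem hx hy
    have := Submodule.smul_mem _ (↑v⁻¹ : S) (hvy ▸ hgmem _ hmem)
    rwa [smul_smul, Units.inv_mul, one_smul] at this
  · rw [Submodule.smul_le]
    intro r hr y _
    suffices h : I.map (algebraMap B S) ≤ Module.annihilator S F by
      rw [LinearMap.mem_ker, map_smul, Module.mem_annihilator.mp (h hr)]
    refine Ideal.map_le_iff_le_comap.mpr fun a ha ↦ Module.mem_annihilator.mpr fun z ↦ ?_
    rw [algebraMap_smul, ← algebraMap_smul K, hI a ha, zero_smul]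

end LocalizedFiber

section Fiber

instance fiberRing.algebra (P : PrimeSpectrum A) : Algebra B (fiberRing A B P) :=
  inferInstanceAs (Algebra B (Localization (fiberSubmonoid A B P) ⧸ fiberIdeal A B P))

instance fiberModule.module (P : PrimeSpectrum A) (N : Type u) [AddCommGroup N] [Module B N] :
    Module B (fiberModule A B P N) :=
  Module.compHom _ (algebraMap B (fiberRing A B P))

instance fiberModule.isScalarTower (P : PrimeSpectrum A) (N : Type u) [AddCommGroup N]
    [Module B N] : IsScalarTower B (fiberRing A B P) (fiberModule A B P N) :=
  .of_algebraMap_smul fun _ _ ↦ rfl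

variable {A B} (P : PrimeSpectrum A) {N : Type u} [AddCommGroup N] [Module B N]

lemma isUnit_algebraMap_fiberRing {s : B} (hs : s ∈ fiberSubmonoid A B P) :
    IsUnit (algebraMap B (fiberRing A B P) s) :=
  (IsLocalization.map_units (Localization (fiberSubmonoid A B P)) ⟨s, hs⟩).map
    (Ideal.Quotient.mk (fiberIdeal A B P))

lemma exists_algebraMap_mul_eq_fiberRing (k : fiberRing A B P) :
    ∃ s ∈ fiberSubmonoid A B P, ∃ b : B,
      algebraMap B (fiberRing A B P) s * k = algebraMap B (fiberRing A B P) b := by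
  obtain ⟨x, rfl⟩ := Ideal.Quotient.mk_surjective (I := fiberIdeal A B P) k
  obtain ⟨⟨b, s⟩, h⟩ := IsLocalization.surj (fiberSubmonoid A B P) x
  refine ⟨s, s.2, b, ?_⟩
  rw [mul_comm] at h
  exact congrArg (Ideal.Quotient.mk (fiberIdeal A B P)) h

lemma fiberIdeal_eq_map :
    fiberIdeal A B P = (P.asIdeal.map (algebraMap A B)).map
      (algebraMap B (Localization (fiberSubmonoid A B P))) :=
  (Ideal.map_map _ _).symm

lemma algebraMap_fiberRing_eq_zero {b : B} (hb : b ∈ P.asIdeal.map (algebraMap A B)) :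
    algebraMap B (fiberRing A B P) b = 0 :=
  Ideal.Quotient.eq_zero_iff_mem.mpr (fiberIdeal_eq_map (B := B) P ▸ Ideal.mem_map_of_mem _ hb)

/-- A prime of `B` over `P` comes from a prime of the fiber ring. -/
lemma exists_fiberRing_prime (Q : Ideal B) [Q.IsPrime]
    (hQ : Q.comap (algebraMap A B) = P.asIdeal) :
    ∃ q : Ideal (fiberRing A B P), q.IsPrime ∧ q.comap (algebraMap B (fiberRing A B P)) = Q := by
  let φ : Localization (fiberSubmonoid A B P) →+* Q.ResidueField :=
    IsLocalization.lift (M := fiberSubmonoid A B P) (g := algebraMap B Q.ResidueField) <| by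
      rintro ⟨_, a, ha, rfl⟩
      rw [isUnit_iff_ne_zero, ne_eq, Ideal.algebraMap_residueField_eq_zero]
      intro h
      exact ha (hQ ▸ h)
  have hφ (b : B) : φ (algebraMap B _ b) = algebraMap B Q.ResidueField b :=
    IsLocalization.lift_eq _ b
  have hker : fiberIdeal A B P ≤ RingHom.ker φ := by
    refine Ideal.map_le_iff_le_comap.mpr fun a ha ↦ ?_
    rw [Ideal.mem_comap, RingHom.mem_ker, RingHom.comp_apply, hφ,
      Ideal.algebraMap_residueField_eq_zero, ← Ideal.mem_comap, hQ]
    exact ha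
  let ψ : fiberRing A B P →+* Q.ResidueField := Ideal.Quotient.lift (fiberIdeal A B P) φ hker
  refine ⟨RingHom.ker ψ, RingHom.ker_isPrime ψ, ?_⟩
  ext b
  rw [Ideal.mem_comap, RingHom.mem_ker]
  exact (hφ b ▸ Ideal.algebraMap_residueField_eq_zero : φ (algebraMap B _ b) = 0 ↔ _)

variable (N) in
/-- The canonical map from a module to its fiber over `P`. -/
def fiberModule.mk : N →ₗ[B] fiberModule A B P N where
  toFun x := Submodule.Quotient.mk (LocalizedModule.mkLinearMap (fiberSubmonoid A B P) N x)
  map_add' x y := by rw [map_add]; rfl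
  map_smul' b x := by
    rw [map_smul, ← algebraMap_smul (Localization (fiberSubmonoid A B P))]
    rfl

lemma exists_smul_eq_fiberModule_mk (z : fiberModule A B P N) :
    ∃ s ∈ fiberSubmonoid A B P, ∃ x : N, s • z = fiberModule.mk P N x := by
  obtain ⟨y, rfl⟩ := Submodule.Quotient.mk_surjective _ z
  obtain ⟨⟨x, s⟩, h⟩ := IsLocalizedModule.surj (fiberSubmonoid A B P)
    (LocalizedModule.mkLinearMap (fiberSubmonoid A B P) N) y
  refine ⟨s, s.2, x, ?_⟩
  change (s : B) • y = _ at h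
  rw [← algebraMap_smul (Localization (fiberSubmonoid A B P))] at h
  exact congrArg (Submodule.Quotient.mk (p := fiberIdeal A B P • ⊤)) h

lemma exists_smul_mem_of_fiberModule_mk_eq_zero {x : N} (hx : fiberModule.mk (B := B) P N x = 0) :
    ∃ s ∈ fiberSubmonoid A B P,
      s • x ∈ (P.asIdeal.map (algebraMap A B) • ⊤ : Submodule B N) := by
  let L := LocalizedModule.mkLinearMap (fiberSubmonoid A B P) N
  have hmem : L x ∈ fiberIdeal A B P • ⊤ := (Submodule.Quotient.mk_eq_zero _).mp hx
  have key : ∀ y ∈ (fiberIdeal A B P • ⊤ : Submodule (Localization (fiberSubmonoid A B P))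
      (LocalizedModule (fiberSubmonoid A B P) N)), ∃ s ∈ fiberSubmonoid A B P,
      ∃ x ∈ (P.asIdeal.map (algebraMap A B) • ⊤ : Submodule B N), s • y = L x := by
    intro y hy
    induction hy using Submodule.smul_induction_on' with
    | smul r hr y _ =>
      rw [fiberIdeal_eq_map, IsLocalization.mem_map_algebraMap_iff (fiberSubmonoid A B P)] at hr
      obtain ⟨⟨i, s⟩, hi⟩ := hr
      obtain ⟨⟨x, t⟩, hy⟩ := IsLocalizedModule.surj (fiberSubmonoid A B P) L y
      change (t : B) • y = L x at hy
      refine ⟨s * t, mul_mem s.2 t.2, (i : B) • x, Submodule.smul_mem_smul i.2 trivial, ?_⟩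
      rw [map_smul, ← hy, ← algebraMap_smul (Localization (fiberSubmonoid A B P)) (i : B), ← hi,
        mul_comm, ← algebraMap_smul (Localization (fiberSubmonoid A B P)) (_ * _),
        ← algebraMap_smul (Localization (fiberSubmonoid A B P)) (t : B)]
      simp only [smul_smul, map_mul]
      congr 1
      ring
    | add y₁ _ y₂ _ h₁ h₂ =>
      obtain ⟨s₁, hs₁, x₁, hx₁, e₁⟩ := h₁
      obtain ⟨s₂, hs₂, x₂, hx₂, e₂⟩ := h₂
      refine ⟨s₁ * s₂, mul_mem hs₁ hs₂, s₂ • x₁ + s₁ • x₂,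
        add_mem (Submodule.smul_mem _ _ hx₁) (Submodule.smul_mem _ _ hx₂), ?_⟩
      rw [map_add, map_smul, map_smul, ← e₁, ← e₂, smul_add, mul_smul, mul_smul, smul_comm s₁ s₂]
  obtain ⟨s, hs, x', hx', e⟩ := key _ hmem
  rw [← map_smul] at e
  obtain ⟨t, ht⟩ := (IsLocalizedModule.eq_iff_exists (fiberSubmonoid A B P) L).mp e
  change (t : B) • s • x = (t : B) • x' at ht
  refine ⟨t * s, mul_mem t.2 hs, ?_⟩
  rw [mul_smul, ht]
  exact Submodule.smul_mem _ _ hx'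

end Fiber

theorem tensor_serreS_of_serreS (A B : Type u) [CommRing A] [CommRing B] [IsNoetherianRing A] [IsNoetherianRing B]
    [Algebra A B] (n : ℕ)
    (M : Type u) [AddCommGroup M] [Module A M] [Module.Finite A M]
    (N : Type u) [AddCommGroup N] [Module A N] [Module B N] [IsScalarTower A B N]
    [Module.Finite B N] [Module.Flat A N]
    (hM : SerreCondS A n M)
    (hfib : ∀ P : PrimeSpectrum A, SerreCondS (fiberRing A B P) n (fiberModule A B P N)) :
    SerreCondS B n (M ⊗[A] N) := by
  intro Q hQ
  let P : PrimeSpectrum A := PrimeSpectrum.comap (algebraMap A B) Q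
  obtain ⟨q, hq, hqQ⟩ := exists_fiberRing_prime P Q.asIdeal rfl
  let R := Localization.AtPrime P.asIdeal
  let S := Localization.AtPrime Q.asIdeal
  let C := Localization.AtPrime q
  let N' := LocalizedModule Q.asIdeal.primeCompl N
  let F := LocalizedModule q.primeCompl (fiberModule A B P N)
  let : Algebra R S :=
    (Localization.localRingHom P.asIdeal Q.asIdeal (algebraMap A B) rfl).toAlgebra
  have : IsLocalHom (algebraMap R S) :=
    Localization.isLocalHom_localRingHom P.asIdeal Q.asIdeal (algebraMap A B) rfl
  have : IsScalarTower A R S := .of_algebraMap_eq fun a ↦ by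
    rw [IsScalarTower.algebraMap_apply A B S]
    exact (Localization.localRingHom_to_map _ _ _ rfl a).symm
  let : Module R N' := Module.compHom N' (algebraMap R S)
  have : IsScalarTower R S N' := .of_algebraMap_smul fun _ _ ↦ rfl
  have : IsScalarTower A B N' := inferInstance
  have : IsScalarTower A S N' := inferInstance
  have : IsScalarTower B S N' := inferInstance
  have : IsScalarTower A R N' := .of_algebraMap_smul fun a x ↦ by
    rw [← algebraMap_smul S, ← IsScalarTower.algebraMap_apply, algebraMap_smul]
  have : Module.Flat A N' := .of_isLocalizedModule_tower Q.asIdeal.primeCompl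
    (LocalizedModule.mkLinearMap Q.asIdeal.primeCompl N)
  have : Module.Flat R N' :=
    (Module.flat_iff_of_isLocalization R P.asIdeal.primeCompl N').mpr inferInstance
  have : Module.Finite S N' :=
    .of_isLocalizedModule Q.asIdeal.primeCompl (LocalizedModule.mkLinearMap _ N)
  have : Module.Finite R (LocalizedModule P.asIdeal.primeCompl M) :=
    .of_isLocalizedModule P.asIdeal.primeCompl (LocalizedModule.mkLinearMap _ M)
  have : IsNoetherianRing R := IsLocalization.isNoetherianRing P.asIdeal.primeCompl R inferInstance
  have : IsNoetherianRing S := IsLocalization.isNoetherianRing Q.asIdeal.primeCompl S inferInstance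
  have hQC : ∀ t : Q.asIdeal.primeCompl, IsUnit (algebraMap B C t) := fun t ↦ by
    rw [IsScalarTower.algebraMap_apply B (fiberRing A B P) C]
    exact IsLocalization.map_units C (⟨_, fun h ↦ t.2 (hqQ.le h)⟩ : q.primeCompl)
  let : Algebra S C := (IsLocalization.lift (M := Q.asIdeal.primeCompl) hQC).toAlgebra
  have : IsScalarTower B S C := .of_algebraMap_eq fun b ↦ (IsLocalization.lift_eq hQC b).symm
  let : Module S F := Module.compHom F (algebraMap S C)
  have : IsScalarTower S C F := .of_algebraMap_smul fun _ _ ↦ rfl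
  have : IsScalarTower B C F := inferInstance
  have : IsScalarTower B S F := .of_algebraMap_smul fun b x ↦ by
    rw [← algebraMap_smul C, ← IsScalarTower.algebraMap_apply, algebraMap_smul]
  have : IsScalarTower B (fiberRing A B P) F := .of_algebraMap_smul fun b x ↦ by
    rw [← algebraMap_smul C, ← IsScalarTower.algebraMap_apply, algebraMap_smul]
  let j := LocalizedModule.mkLinearMap q.primeCompl (fiberModule A B P N)
  let g := LocalizedModule.mkLinearMap Q.asIdeal.primeCompl N
  let jπ : N →ₗ[B] F := (j.restrictScalars B) ∘ₗ fiberModule.mk P N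
  have hFunit : ∀ t : Q.asIdeal.primeCompl, IsUnit (algebraMap B (Module.End B F) t) :=
    (isLocalizedModule_id Q.asIdeal.primeCompl F S).map_units
  let f : N' →ₗ[S] F := LinearMap.extendScalarsOfIsLocalization Q.asIdeal.primeCompl S
    (IsLocalizedModule.lift Q.asIdeal.primeCompl g jπ hFunit)
  have hfg : ∀ x, f (g x) = j (fiberModule.mk P N x) := fun x ↦
    IsLocalizedModule.lift_apply Q.asIdeal.primeCompl g jπ hFunit x
  have hunit : ∀ s ∈ fiberSubmonoid A B P, IsUnit (algebraMap B (fiberRing A B P) s) :=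
    fun s hs ↦ isUnit_algebraMap_fiberRing P hs
  have hK := exists_algebraMap_mul_eq_fiberRing (B := B) P
  have hfsurj : Function.Surjective f :=
    surjective_of_localizedFiber hunit hqQ hK (exists_smul_eq_fiberModule_mk P) hfg
  have hker : LinearMap.ker f = (IsLocalRing.maximalIdeal R).map (algebraMap R S) • ⊤ := by
    rw [ker_eq_of_localizedFiber hunit hqQ hK hfg (fun a ha ↦ algebraMap_fiberRing_eq_zero P ha)
      (fun x hx ↦ exists_smul_mem_of_fiberModule_mk_eq_zero P hx),
      ← Localization.AtPrime.map_eq_maximalIdeal, Ideal.map_map, Ideal.map_map,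
      ← IsScalarTower.algebraMap_eq, ← IsScalarTower.algebraMap_eq]
  have hCsurj : Function.Surjective (algebraMap S C) :=
    algebraMap_surjective_of_localizedFiber hunit hqQ hK
  have : Module.Finite S F := .of_surjective f hfsurj
  let e := localizedTensorEquiv M N P.asIdeal.primeCompl Q.asIdeal.primeCompl g
  have : Nontrivial (LocalizedModule Q.asIdeal.primeCompl (M ⊗[A] N)) :=
    Module.mem_support_iff.mp hQ
  have : Nontrivial (N' ⊗[R] LocalizedModule P.asIdeal.primeCompl M) := e.symm.nontrivial
  have hPM : P ∈ Module.support A M :=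
    Module.mem_support_iff.mpr (TensorProduct.nontrivial_right R N' _)
  have : Nontrivial N' :=
    TensorProduct.nontrivial_left R N' (LocalizedModule P.asIdeal.primeCompl M)
  have hqF : (⟨q, hq⟩ : PrimeSpectrum (fiberRing A B P)) ∈
      Module.support (fiberRing A B P) (fiberModule A B P N) := by
    rw [Module.mem_support_iff]
    exact nontrivial_of_ker_eq_smul_top (IsLocalRing.map_maximalIdeal_le _) hker
  have hF := min_supportDim_le_localDepth_of_surjective hCsurj (hfib P ⟨q, hq⟩ hqF)
  have hT := min_supportDim_le_localDepth_tensor hfsurj hker (hM P hPM) hF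
  rw [heightAt, depthAt, localDepth_congr e]
  exact (min_le_min_left _ (Module.supportDim_eq_of_equiv e).le).trans hT

end
end
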